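/- arXiv:0902.1358 — 2 statements merged into one kernel-verified Lean document; each statement's English description precedes it below -/
import Mathlib

section
/- Let A be a finite alphabet, F the free group on A, R a subset of F, S a finite subset of R, and U a finite subset of F. Set R' = (R \ S) ∪ U and assume that the normal closure of R' in F equals the normal closure of R in F (so R' is obtained from R by a T-transformation). Then there exists a constant M ≥ 0 such that for every W in the normal closure of R: if W can be written as a product of L conjugates of elements of R ∪ R⁻¹, then W can be written as a product of at most (1+M)·L conjugates of elements of R' ∪ R'⁻¹. In particular, Area_{R'}(W) ≤ (1+M)·Area_R(W) for all such W. -/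
/-- `W` is a product of `L` conjugates of elements of `R ∪ R⁻¹`. -/
def IsProdConjPM {G : Type*} [Group G] (R : Set G) (L : ℕ) (W : G) : Prop :=
  ∃ f : Fin L → G,
    (∀ j, ∃ x r, r ∈ R ∧ (f j = x * r * x⁻¹ ∨ f j = x * r⁻¹ * x⁻¹)) ∧
    W = (List.ofFn f).prod

/-- `Area R W` : the minimal number `L` such that `W` is a product of `L`
conjugates of elements of `R ∪ R⁻¹`. -/
noncomputable def Area {G : Type*} [Group G] (R : Set G) (W : G) : ℕ :=
  sInf {L : ℕ | IsProdConjPM R L W}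

theorem isProdConjPM_iff {G : Type*} [Group G] (R : Set G) (L : ℕ) (W : G) :
    IsProdConjPM R L W ↔ ∃ l : List G, l.length = L ∧
      (∀ g ∈ l, ∃ x r, r ∈ R ∧ (g = x * r * x⁻¹ ∨ g = x * r⁻¹ * x⁻¹)) ∧ W = l.prod := by
  constructor
  · rintro ⟨f, hf, rfl⟩
    refine ⟨List.ofFn f, by simp, ?_, rfl⟩
    intro g hg
    obtain ⟨j, rfl⟩ := (List.mem_ofFn' f g).1 hg
    exact hf j
  · rintro ⟨l, rfl, hl, rfl⟩
    refine ⟨l.get, fun j => hl _ (List.get_mem l j), ?_⟩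
    rw [List.ofFn_get]

theorem isProdConjPM_one {G : Type*} [Group G] (R : Set G) : IsProdConjPM R 0 (1 : G) :=
  (isProdConjPM_iff _ _ _).2 ⟨[], rfl, by simp, by simp⟩

theorem isProdConjPM_mul {G : Type*} [Group G] {R : Set G} {a b : ℕ} {v w : G}
    (hv : IsProdConjPM R a v) (hw : IsProdConjPM R b w) : IsProdConjPM R (a + b) (v * w) := by
  rw [isProdConjPM_iff] at *
  obtain ⟨l, rfl, hl, rfl⟩ := hv
  obtain ⟨m, rfl, hm, rfl⟩ := hw
  refine ⟨l ++ m, by simp, ?_, by simp⟩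
  intro g hg
  rcases List.mem_append.1 hg with h | h
  · exact hl g h
  · exact hm g h

theorem isProdConjPM_single {G : Type*} [Group G] {R : Set G} {g : G}
    (h : ∃ x r, r ∈ R ∧ (g = x * r * x⁻¹ ∨ g = x * r⁻¹ * x⁻¹)) : IsProdConjPM R 1 g :=
  (isProdConjPM_iff _ _ _).2 ⟨[g], rfl, by simpa using h, by simp⟩

theorem isProdConjPM_ind {G : Type*} [Group G] {R : Set G} {p : ℕ → G → Prop}
    (h0 : p 0 1)
    (hs : ∀ n g w, (∃ x r, r ∈ R ∧ (g = x * r * x⁻¹ ∨ g = x * r⁻¹ * x⁻¹)) →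
      IsProdConjPM R n w → p n w → p (n + 1) (g * w))
    {n : ℕ} {w : G} (h : IsProdConjPM R n w) : p n w := by
  rw [isProdConjPM_iff] at h
  obtain ⟨l, rfl, hl, rfl⟩ := h
  induction l with
  | nil => simpa using h0
  | cons g l ih =>
    have hl' : ∀ y ∈ l, ∃ x r, r ∈ R ∧ (y = x * r * x⁻¹ ∨ y = x * r⁻¹ * x⁻¹) :=
      fun y hy => hl y (List.mem_cons_of_mem _ hy)
    rw [List.prod_cons, List.length_cons]
    exact hs _ _ _ (hl g List.mem_cons_self)
      ((isProdConjPM_iff _ _ _).2 ⟨l, rfl, hl', rfl⟩) (ih hl')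

theorem isProdConjPM_conj {G : Type*} [Group G] {R : Set G} {n : ℕ} {w : G}
    (h : IsProdConjPM R n w) (y : G) : IsProdConjPM R n (y * w * y⁻¹) := by
  refine isProdConjPM_ind (p := fun n w => IsProdConjPM R n (y * w * y⁻¹)) ?_ ?_ h
  · simpa using isProdConjPM_one R
  · rintro n g w ⟨x, r, hr, hg⟩ - ih
    have h1 : IsProdConjPM R 1 (y * g * y⁻¹) := by
      refine isProdConjPM_single ⟨y * x, r, hr, ?_⟩
      rcases hg with rfl | rfl
      · left; group
      · right; group
    have h2 := isProdConjPM_mul h1 ih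
    rw [add_comm] at h2
    convert h2 using 1
    group

theorem isProdConjPM_inv {G : Type*} [Group G] {R : Set G} {n : ℕ} {w : G}
    (h : IsProdConjPM R n w) : IsProdConjPM R n w⁻¹ := by
  refine isProdConjPM_ind (p := fun n w => IsProdConjPM R n w⁻¹) ?_ ?_ h
  · simpa using isProdConjPM_one R
  · rintro n g w ⟨x, r, hr, hg⟩ - ih
    have h1 : IsProdConjPM R 1 g⁻¹ := by
      refine isProdConjPM_single ⟨x, r, hr, ?_⟩
      rcases hg with rfl | rfl
      · right; group
      · left; group
    rw [mul_inv_rev]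
    exact isProdConjPM_mul ih h1

theorem isProdConjPM_of_mem {G : Type*} [Group G] {R : Set G} {w : G}
    (h : w ∈ Subgroup.normalClosure R) : ∃ n, IsProdConjPM R n w := by
  let N : Subgroup G :=
    { carrier := {w | ∃ n, IsProdConjPM R n w}
      one_mem' := ⟨0, isProdConjPM_one R⟩
      mul_mem' := fun ⟨a, ha⟩ ⟨b, hb⟩ => ⟨a + b, isProdConjPM_mul ha hb⟩
      inv_mem' := fun ⟨a, ha⟩ => ⟨a, isProdConjPM_inv ha⟩ }
  have hN : N.Normal := ⟨fun w ⟨a, ha⟩ g => ⟨a, isProdConjPM_conj ha g⟩⟩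
  have hR : R ⊆ N := fun r hr => ⟨1, isProdConjPM_single ⟨1, r, hr, by simp⟩⟩
  exact Subgroup.normalClosure_le_normal hR h

/-- a T-transformation distorts areas by at most a multiplicative
constant `1 + M`. -/
theorem area_le_of_T_transformation {α : Type} [Fintype α]
    (R S U : Set (FreeGroup α)) (hS : S.Finite) (hSR : S ⊆ R) (hU : U.Finite)
    (hclosure : Subgroup.normalClosure ((R \ S) ∪ U) = Subgroup.normalClosure R) :
    ∃ M : ℕ, 0 ≤ M ∧
      (∀ W ∈ Subgroup.normalClosure R, ∀ L : ℕ,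
        IsProdConjPM R L W →
          ∃ L' : ℕ, L' ≤ (1 + M) * L ∧ IsProdConjPM ((R \ S) ∪ U) L' W) ∧
      (∀ W ∈ Subgroup.normalClosure R,
        Area ((R \ S) ∪ U) W ≤ (1 + M) * Area R W) := by
  have key : ∀ s ∈ R, ∃ n, IsProdConjPM ((R \ S) ∪ U) n s := fun s hs =>
    isProdConjPM_of_mem (hclosure ▸ Subgroup.subset_normalClosure hs)
  have bd : ∃ M : ℕ, ∀ s ∈ S, ∃ n ≤ M, IsProdConjPM ((R \ S) ∪ U) n s := by
    choose! f hf using key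
    obtain ⟨M, hM⟩ := (hS.image f).bddAbove
    exact ⟨M, fun s hs => ⟨f s, hM ⟨s, hs, rfl⟩, hf s (hSR hs)⟩⟩
  obtain ⟨M, hM⟩ := bd
  have hr : ∀ r ∈ R, ∃ n ≤ 1 + M, IsProdConjPM ((R \ S) ∪ U) n r := by
    intro r hr
    by_cases hs : r ∈ S
    · obtain ⟨n, hn, h⟩ := hM r hs
      exact ⟨n, by omega, h⟩
    · exact ⟨1, by omega, isProdConjPM_single ⟨1, r, Or.inl ⟨hr, hs⟩, by simp⟩⟩
  have main : ∀ W, ∀ L : ℕ, IsProdConjPM R L W →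
      ∃ L' : ℕ, L' ≤ (1 + M) * L ∧ IsProdConjPM ((R \ S) ∪ U) L' W := by
    intro W L h
    refine isProdConjPM_ind (p := fun L W =>
      ∃ L' : ℕ, L' ≤ (1 + M) * L ∧ IsProdConjPM ((R \ S) ∪ U) L' W) ?_ ?_ h
    · exact ⟨0, by simp, isProdConjPM_one _⟩
    · rintro n g w ⟨x, r, hrR, hg⟩ - ⟨L', hL', hw⟩
      obtain ⟨k, hk, h1⟩ := hr r hrR
      refine ⟨k + L', by rw [mul_add]; omega, isProdConjPM_mul ?_ hw⟩
      rcases hg with rfl | rfl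
      · exact isProdConjPM_conj h1 x
      · exact isProdConjPM_conj (isProdConjPM_inv h1) x
  refine ⟨M, Nat.zero_le _, fun W _ L h => main W L h, fun W hW => ?_⟩
  obtain ⟨L', hL', h'⟩ := main W (Area R W) (Nat.sInf_mem (isProdConjPM_of_mem hW))
  exact (Nat.sInf_le h').trans hL'
end

section
/- There exists a constant C > 1 such that for every integer x ≥ 2 and every element W of N(∞) with |W| ≤ x, there is an expression W = ∏_{j=1}^{L} X_j R_j^{ε_j} X_j^{-1} in F with X_j ∈ F, R_j ∈ R(∞), ε_j = ±1, such that: the number of indices j with h(R_j) = 0 is at most 4·C·x²·log₂(x); for every i with 1 ≤ i ≤ log₂(x), the number of indices j with h(R_j) = i is at most C·x²/2^{i−1}; and there is no index j with h(R_j) > log₂(x). -/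
/-- The four-letter alphabet `{a, b, c, d}`. -/
inductive L4 : Type
  | a | b | c | d
  deriving DecidableEq

/-- The free group `F = F(a, b, c, d)`. -/
abbrev F4 : Type := FreeGroup L4

def ga : F4 := FreeGroup.of L4.a
def gb : F4 := FreeGroup.of L4.b
def gc : F4 := FreeGroup.of L4.c
def gd : F4 := FreeGroup.of L4.d

/-- The endomorphism `σ` of `F(a,b,c,d)`:
`σ(a) = aca`, `σ(b) = d`, `σ(c) = b`, `σ(d) = c`. -/
def sigma : F4 →* F4 :=
  FreeGroup.lift fun x => match x with
    | L4.a => ga * gc * ga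
    | L4.b => gd
    | L4.c => gb
    | L4.d => gc

/-- The Lysenok relator set
`R(∞) = {a², b², c², d², bcd} ∪ {σⁱ((ad)⁴) : i ≥ 0} ∪ {σⁱ((adacac)⁴) : i ≥ 0}`. -/
def Rinf : Set F4 :=
  {ga ^ 2, gb ^ 2, gc ^ 2, gd ^ 2, gb * gc * gd}
    ∪ {w | ∃ i : ℕ, w = (⇑sigma)^[i] ((ga * gd) ^ 4)}
    ∪ {w | ∃ i : ℕ, w = (⇑sigma)^[i] ((ga * gd * ga * gc * ga * gc) ^ 4)}

/-- The partition `R(∞) = ⋃ᵢ S(i)` by height: `S(0)` consists of the seven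
relators `a², b², c², d², bcd, (ad)⁴, (adacac)⁴`, and for `i ≥ 1`,
`S(i) = {σⁱ((ad)⁴), σⁱ((adacac)⁴)}`. -/
def Sh : ℕ → Set F4
  | 0 => {ga ^ 2, gb ^ 2, gc ^ 2, gd ^ 2, gb * gc * gd,
          (ga * gd) ^ 4, (ga * gd * ga * gc * ga * gc) ^ 4}
  | (i + 1) => {(⇑sigma)^[i + 1] ((ga * gd) ^ 4),
                (⇑sigma)^[i + 1] ((ga * gd * ga * gc * ga * gc) ^ 4)}


set_option linter.unusedSimpArgs false

def r1 : F4 := (ga * gd) ^ 4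
def r2 : F4 := (ga * gd * ga * gc * ga * gc) ^ 4

def TT : ℕ → Set F4
  | 0 => {ga ^ 2}
  | 1 => {gb ^ 2, gc ^ 2, gd ^ 2, gb * gc * gd}
  | (i + 2) => {(⇑sigma)^[i] r1, (⇑sigma)^[i] r2}

inductive Cst : (ℕ → ℕ) → F4 → Prop
  | one (v : ℕ → ℕ) : Cst v 1
  | mul {u v w : ℕ → ℕ} {g h : F4} : Cst u g → Cst v h → (∀ i, u i + v i ≤ w i) → Cst w (g * h)
  | rel {v : ℕ → ℕ} (i : ℕ) {r : F4} (x : F4) : r ∈ TT i → 1 ≤ v i → Cst v (x * r * x⁻¹)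
  | irel {v : ℕ → ℕ} (i : ℕ) {r : F4} (x : F4) : r ∈ TT i → 1 ≤ v i → Cst v (x * r⁻¹ * x⁻¹)

lemma Cst.mono {u v : ℕ → ℕ} {g : F4} (h : Cst u g) (huv : ∀ i, u i ≤ v i) : Cst v g := by
  cases h with
  | one => exact Cst.one _
  | mul h1 h2 h3 => exact Cst.mul h1 h2 fun i => (h3 i).trans (huv i)
  | rel i x hr hi => exact Cst.rel i x hr (hi.trans (huv i))
  | irel i x hr hi => exact Cst.irel i x hr (hi.trans (huv i))

lemma Cst.conj {v : ℕ → ℕ} {g : F4} (h : Cst v g) (y : F4) : Cst v (y * g * y⁻¹) := by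
  induction h with
  | one v => simpa using Cst.one v
  | @mul u v w g h _ _ h3 ih1 ih2 =>
    have := Cst.mul ih1 ih2 h3
    convert this using 1; group
  | rel i x hr hi =>
    have := Cst.rel i (y * x) hr hi
    convert this using 1; group
  | irel i x hr hi =>
    have := Cst.irel i (y * x) hr hi
    convert this using 1; group

lemma Cst.inv {v : ℕ → ℕ} {g : F4} (h : Cst v g) : Cst v g⁻¹ := by
  induction h with
  | one v => simpa using Cst.one v
  | @mul u v w g h _ _ h3 ih1 ih2 =>
    rw [mul_inv_rev]
    exact Cst.mul ih2 ih1 fun i => by have := h3 i; omega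
  | rel i x hr hi =>
    have := Cst.irel i x hr hi
    convert this using 1; group
  | irel i x hr hi =>
    have := Cst.rel i x hr hi
    convert this using 1; group

def shv (v : ℕ → ℕ) : ℕ → ℕ
  | 0 => 2 * v 0
  | 1 => v 0 + v 1
  | 2 => 0
  | (i + 3) => v (i + 2)

@[simp] lemma sigma_a : sigma ga = ga * gc * ga := by simp [sigma, ga]
@[simp] lemma sigma_b : sigma gb = gd := by simp [sigma, gb]
@[simp] lemma sigma_c : sigma gc = gb := by simp [sigma, gc]
@[simp] lemma sigma_d : sigma gd = gc := by simp [sigma, gd]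

lemma Cst_shv_rel {v : ℕ → ℕ} {i : ℕ} {r : F4} (hr : r ∈ TT i) (hi : 1 ≤ v i) :
    Cst (shv v) (sigma r) := by
  match i, hr, hi with
  | 0, hr, hi =>
    simp only [TT, Set.mem_singleton_iff] at hr
    subst hr
    have e : sigma (ga ^ 2) = ((ga * gc) * ga ^ 2 * (ga * gc)⁻¹) * ((ga * gc ^ 2 * ga⁻¹) *
      (1 * ga ^ 2 * 1⁻¹)) := by
      simp [pow_two, mul_assoc]
    rw [e]
    have h1 : Cst (fun j => if j = 0 then 1 else 0) ((ga * gc) * ga ^ 2 * (ga * gc)⁻¹) :=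
      Cst.rel 0 _ (by simp [TT]) (by simp)
    have h2 : Cst (fun j => if j = 1 then 1 else 0) (ga * gc ^ 2 * ga⁻¹) :=
      Cst.rel 1 _ (by simp [TT]) (by simp)
    have h3 : Cst (fun j => if j = 0 then 1 else 0) (1 * ga ^ 2 * 1⁻¹) :=
      Cst.rel 0 _ (by simp [TT]) (by simp)
    refine Cst.mul h1 (Cst.mul h2 h3 (fun i => le_rfl)) ?_
    intro i
    match i with
    | 0 => simp [shv]; omega
    | 1 => simp [shv]; omega
    | 2 => simp [shv]
    | (i + 3) => simp [shv]
  | 1, hr, hi =>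
    have hs : 1 ≤ shv v 1 := by simp only [shv]; omega
    simp only [TT, Set.mem_insert_iff, Set.mem_singleton_iff] at hr
    rcases hr with rfl | rfl | rfl | rfl
    · have := Cst.rel (v := shv v) 1 1 (show gd ^ 2 ∈ TT 1 by simp [TT]) hs
      simpa using this
    · have := Cst.rel (v := shv v) 1 1 (show gb ^ 2 ∈ TT 1 by simp [TT]) hs
      simpa using this
    · have := Cst.rel (v := shv v) 1 1 (show gc ^ 2 ∈ TT 1 by simp [TT]) hs
      simpa using this
    · have := Cst.rel (v := shv v) 1 gd (show gb * gc * gd ∈ TT 1 by simp [TT]) hs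
      convert this using 1
      simp only [map_mul, sigma_b, sigma_c, sigma_d]; group
  | (i + 2), hr, hi =>
    have hm : sigma r ∈ TT (i + 3) := by
      simp only [TT, Set.mem_insert_iff, Set.mem_singleton_iff] at hr ⊢
      rcases hr with rfl | rfl
      · left; rw [Function.iterate_succ_apply']
      · right; rw [Function.iterate_succ_apply']
    have := Cst.rel (v := shv v) (i + 3) 1 hm hi
    simpa using this

lemma Cst.sig {v : ℕ → ℕ} {g : F4} (h : Cst v g) : Cst (shv v) (sigma g) := by
  induction h with
  | one v => simpa using Cst.one _
  | @mul u v w g h _ _ h3 ih1 ih2 =>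
    rw [map_mul]
    refine Cst.mul ih1 ih2 fun i => ?_
    match i with
    | 0 => have := h3 0; simp only [shv]; omega
    | 1 => have := h3 0; have := h3 1; simp only [shv]; omega
    | 2 => simp [shv]
    | (i + 3) => exact h3 (i + 2)
  | rel i x hr hi =>
    simp only [map_mul, map_inv]
    exact (Cst_shv_rel hr hi).conj _
  | irel i x hr hi =>
    simp only [map_mul, map_inv]
    exact (Cst_shv_rel hr hi).inv.conj _

/-- `x` and `y` differ by `k • u` relators. -/
def Rl (u : ℕ → ℕ) (k : ℕ) (x y : F4) : Prop := Cst (fun i => k * u i) (x * y⁻¹)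

lemma Rl.refl {u : ℕ → ℕ} {k : ℕ} (x : F4) : Rl u k x x := by
  unfold Rl; simpa using Cst.one _

lemma Rl.mono {u : ℕ → ℕ} {k l : ℕ} {x y : F4} (h : Rl u k x y) (hkl : k ≤ l) : Rl u l x y :=
  Cst.mono h fun _ => Nat.mul_le_mul_right _ hkl

lemma Rl.symm {u : ℕ → ℕ} {k : ℕ} {x y : F4} (h : Rl u k x y) : Rl u k y x := by
  have := Cst.inv h
  unfold Rl; convert this using 1; group

lemma Rl.trans {u : ℕ → ℕ} {k l : ℕ} {x y z : F4} (h : Rl u k x y) (h' : Rl u l y z) :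
    Rl u (k + l) x z := by
  have := Cst.mul (w := fun i => (k + l) * u i) h h' (fun i => by rw [add_mul])
  unfold Rl; convert this using 1; group

lemma Rl.mul_left {u : ℕ → ℕ} {k : ℕ} {x y : F4} (h : Rl u k x y) (z : F4) :
    Rl u k (z * x) (z * y) := by
  have := Cst.conj h z
  unfold Rl; convert this using 1; group

lemma Rl.mul_right {u : ℕ → ℕ} {k : ℕ} {x y : F4} (h : Rl u k x y) (z : F4) :
    Rl u k (x * z) (y * z) := by
  unfold Rl at *; convert h using 1; group

lemma Rl.mul {u : ℕ → ℕ} {k l : ℕ} {x y z w : F4} (h : Rl u k x y) (h' : Rl u l z w) :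
    Rl u (k + l) (x * z) (y * w) := (h.mul_right z).trans (h'.mul_left y)

def u2 : ℕ → ℕ := fun i => if i ≤ 1 then 1 else 0
def u4 : ℕ → ℕ := fun i => if i ≤ 3 then 1 else 0

lemma Rl.to4 {k : ℕ} {x y : F4} (h : Rl u2 k x y) : Rl u4 k x y :=
  Cst.mono h fun i => Nat.mul_le_mul_left _ (by unfold u2 u4; split_ifs <;> omega)

lemma ex_rl (u : ℕ → ℕ) (x y : F4)
    (h : ∀ (G : Type) [Group G] (f : F4 →* G), (∀ i, 1 ≤ u i → ∀ r ∈ TT i, f r = 1) → f x = f y) :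
    ∃ k, Rl u k x y := by
  let S : Subgroup F4 :=
    { carrier := {g | ∃ k, Cst (fun i => k * u i) g}
      mul_mem' := by
        rintro a b ⟨k, hk⟩ ⟨l, hl⟩
        exact ⟨k + l, Cst.mul hk hl fun i => by rw [add_mul]⟩
      one_mem' := ⟨0, Cst.one _⟩
      inv_mem' := by
        rintro a ⟨k, hk⟩
        exact ⟨k, hk.inv⟩ }
  have hS : S.Normal := ⟨by
    rintro a ⟨k, hk⟩ g
    exact ⟨k, hk.conj g⟩⟩
  have := h (F4 ⧸ S) (QuotientGroup.mk' S) (by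
    intro i hi r hr
    refine (QuotientGroup.eq_one_iff (N := S) r).2 ⟨1, ?_⟩
    have := Cst.rel (v := fun i => 1 * u i) i 1 hr (by simpa using hi)
    simpa using this)
  have h2 : x * y⁻¹ ∈ S := by
    rw [← QuotientGroup.eq_one_iff (N := S)]
    have h3 : (QuotientGroup.mk' S) (x * y⁻¹) = 1 := by
      rw [map_mul, map_inv, this, mul_inv_cancel]
    exact h3
  exact h2

lemma fin_ex {ι : Type} [Finite ι] {P : ι → ℕ → Prop} (hm : ∀ i k l, k ≤ l → P i k → P i l)
    (h : ∀ i, ∃ k, P i k) : ∃ K, ∀ i, P i K := by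
  choose f hf using h
  obtain ⟨K, hK⟩ := (Set.finite_range f).bddAbove
  exact ⟨K, fun i => hm i _ _ (hK ⟨i, rfl⟩) (hf i)⟩

lemma rel2 (x y : F4) (h : ∀ (G : Type) [Group G] (f : F4 →* G), f ga * f ga = 1 →
    f gc * f gc = 1 → f gd * f gd = 1 → f gb = f gc * f gd → f gd * f gc = f gc * f gd →
    f x = f y) : ∃ k, Rl u2 k x y := by
  refine ex_rl u2 x y fun G _ f hf => ?_
  have ha : f ga * f ga = 1 := by
    have := hf 0 (by simp [u2]) (ga ^ 2) (by simp [TT]); simpa [pow_two] using this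
  have hb : f gb * f gb = 1 := by
    have := hf 1 (by simp [u2]) (gb ^ 2) (by simp [TT]); simpa [pow_two] using this
  have hc : f gc * f gc = 1 := by
    have := hf 1 (by simp [u2]) (gc ^ 2) (by simp [TT]); simpa [pow_two] using this
  have hd : f gd * f gd = 1 := by
    have := hf 1 (by simp [u2]) (gd ^ 2) (by simp [TT]); simpa [pow_two] using this
  have hbcd : f gb * f gc * f gd = 1 := by
    have := hf 1 (by simp [u2]) (gb * gc * gd) (by simp [TT]); simpa [pow_two] using this
  have e1 : f gb = f gc * f gd := by
    have h1 : f gb * (f gc * f gd) = f gb * f gb := by rw [hb, ← mul_assoc, hbcd]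
    exact (mul_left_cancel h1).symm
  have e2 : f gd * f gc = f gc * f gd := by
    have h1 : (f gc * f gd) * (f gd * f gc) = (f gc * f gd) * (f gc * f gd) := by
      rw [← e1, hb, e1]
      calc f gc * f gd * (f gd * f gc) = f gc * (f gd * f gd) * f gc := by group
        _ = 1 := by rw [hd, mul_one, hc]
    exact mul_left_cancel h1
  exact h G f ha hc hd e1 e2

lemma rel4 (x y : F4) (h : ∀ (G : Type) [Group G] (f : F4 →* G), f ga * f ga = 1 →
    f gc * f gc = 1 → f gd * f gd = 1 → f gb = f gc * f gd → f gd * f gc = f gc * f gd →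
    (f ga * f gd) ^ 4 = 1 → (f ga * f gd * f ga * f gc * f ga * f gc) ^ 4 = 1 →
    (f ga * f gc * f ga * f gc) ^ 4 = 1 →
    f x = f y) : ∃ k, Rl u4 k x y := by
  refine ex_rl u4 x y fun G _ f hf => ?_
  have hb : f gb * f gb = 1 := by
    have := hf 1 (by simp [u4]) (gb ^ 2) (by simp [TT]); simpa [pow_two] using this
  have ha : f ga * f ga = 1 := by
    have := hf 0 (by simp [u4]) (ga ^ 2) (by simp [TT]); simpa [pow_two] using this
  have hc : f gc * f gc = 1 := by
    have := hf 1 (by simp [u4]) (gc ^ 2) (by simp [TT]); simpa [pow_two] using this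
  have hd : f gd * f gd = 1 := by
    have := hf 1 (by simp [u4]) (gd ^ 2) (by simp [TT]); simpa [pow_two] using this
  have hbcd : f gb * f gc * f gd = 1 := by
    have := hf 1 (by simp [u4]) (gb * gc * gd) (by simp [TT]); simpa [pow_two] using this
  have e1 : f gb = f gc * f gd := by
    have h1 : f gb * (f gc * f gd) = f gb * f gb := by rw [hb, ← mul_assoc, hbcd]
    exact (mul_left_cancel h1).symm
  have e2 : f gd * f gc = f gc * f gd := by
    have h1 : (f gc * f gd) * (f gd * f gc) = (f gc * f gd) * (f gc * f gd) := by
      rw [← e1, hb, e1]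
      calc f gc * f gd * (f gd * f gc) = f gc * (f gd * f gd) * f gc := by group
        _ = 1 := by rw [hd, mul_one, hc]
    exact mul_left_cancel h1
  have h4 := hf 2 (by simp [u4]) r1 (by simp [TT])
  have h5 := hf 2 (by simp [u4]) r2 (by simp [TT])
  have h6 := hf 3 (by simp [u4]) (sigma r1) (by simp [TT])
  simp only [r1, r2, map_pow, map_mul, sigma_a, sigma_d] at h4 h5 h6
  exact h G f ha hc hd e1 e2 h4 h5 h6


inductive V3 : Type
  | b | c | d
  deriving DecidableEq

instance : Finite V3 :=
  Finite.of_surjective (fun i : Fin 3 => match i with | 0 => V3.b | 1 => V3.c | 2 => V3.d) (by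
    intro v; cases v
    · exact ⟨0, rfl⟩
    · exact ⟨1, rfl⟩
    · exact ⟨2, rfl⟩)

abbrev HL : Type := Bool × V3

def V3.l : V3 → L4
  | .b => .b | .c => .c | .d => .d

def gen (x : L4) : F4 := FreeGroup.of x
@[simp] lemma gen_a : gen L4.a = ga := rfl
@[simp] lemma gen_b : gen L4.b = gb := rfl
@[simp] lemma gen_c : gen L4.c = gc := rfl
@[simp] lemma gen_d : gen L4.d = gd := rfl

def ev (w : List L4) : F4 := (w.map gen).prod
@[simp] lemma ev_nil : ev [] = 1 := rfl
@[simp] lemma ev_cons (x : L4) (w : List L4) : ev (x :: w) = gen x * ev w := by simp [ev]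
@[simp] lemma ev_append (w w' : List L4) : ev (w ++ w') = ev w * ev w' := by simp [ev]

def yv : HL → F4
  | (false, v) => gen v.l
  | (true, v) => ga * gen v.l * ga

def p1 : HL → List L4
  | (false, .b) => [.c]
  | (false, .c) => [.d]
  | (false, .d) => [.b]
  | (true, .b) => [.a]
  | (true, .c) => [.a]
  | (true, .d) => []

def p0 (y : HL) : List L4 := p1 (!y.1, y.2)

def rh : HL → F4
  | (false, .b) => gc
  | (false, .c) => gc
  | (false, .d) => 1
  | (true, .b) => ga * gc * ga
  | (true, .c) => ga * gc * ga
  | (true, .d) => 1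

def ee : HL → F4
  | (true, .b) => ga * gd * ga
  | (true, .d) => ga * gd * ga
  | _ => 1

def dl : HL → F4
  | (false, .b) => gd
  | (false, .d) => gd
  | _ => 1

def evY (Y : List HL) : F4 := (Y.map yv).prod
@[simp] lemma evY_nil : evY [] = 1 := rfl
@[simp] lemma evY_cons (x : HL) (w : List HL) : evY (x :: w) = yv x * evY w := by simp [evY]
def rY (Y : List HL) : F4 := (Y.map rh).prod
@[simp] lemma rY_nil : rY [] = 1 := rfl
@[simp] lemma rY_cons (x : HL) (w : List HL) : rY (x :: w) = rh x * rY w := by simp [rY]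

def tt : Fin 4 → F4
  | 0 => ga * gd * ga
  | 1 => gc * (ga * gd * ga) * gc
  | 2 => (ga * gc * ga) * (gc * (ga * gd * ga) * gc) * (ga * gc * ga)
  | 3 => gc * ((ga * gc * ga) * (gc * (ga * gd * ga) * gc) * (ga * gc * ga)) * gc

def uu : Fin 8 → F4
  | 0 => 1
  | 1 => gc
  | 2 => ga * gc * ga
  | 3 => (ga * gc * ga) * gc
  | 4 => gc * (ga * gc * ga)
  | 5 => gc * ((ga * gc * ga) * gc)
  | 6 => (ga * gc * ga) * (gc * (ga * gc * ga))
  | 7 => (ga * gc * ga) * (gc * ((ga * gc * ga) * gc))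

lemma inv_can {G : Type*} [Group G] {x : G} (h : x * x = 1) (y : G) : x * (x * y) = y := by
  rw [← mul_assoc, h, one_mul]

lemma sq_comm4 {G : Type*} [Group G] {x y : G} (hx : x * x = 1) (hy : y * y = 1)
    (h : (x * y) ^ 4 = 1) : x * (y * (x * y)) = y * (x * (y * x)) := by
  have hx' : x⁻¹ = x := inv_eq_of_mul_eq_one_right hx
  have hy' : y⁻¹ = y := inv_eq_of_mul_eq_one_right hy
  have h2 : (x * (y * (x * y))) * (x * (y * (x * y))) = 1 := by
    rw [← h]; simp [pow_succ, mul_assoc]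
  have := eq_inv_of_mul_eq_one_left h2
  rw [this]; simp [hx', hy', mul_assoc]

lemma eqA (y : HL) : ∃ k, Rl u4 k (yv y) (sigma (ev (p1 y)) * ee y) ∧
    Rl u4 k ((rh y)⁻¹ * (ga * sigma (ev (p0 y)) * ga)) (ee y) ∧
    Rl u4 k (sigma (ev (p1 y))) (dl y * rh y) := by
  have h1 : ∃ k, Rl u2 k (yv y) (sigma (ev (p1 y)) * ee y) := by
    refine rel2 _ _ fun G _ f ha hc hd hb hdc => ?_
    have ha' := inv_can ha
    have hc' := inv_can hc
    have hd' := inv_can hd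
    rcases y with ⟨s, v⟩
    cases s <;> cases v <;> simp [yv, p1, ee, V3.l, hb, ha, hc, hd, ha', hc', hd', mul_assoc]
  have h2 : ∃ k, Rl u2 k ((rh y)⁻¹ * (ga * sigma (ev (p0 y)) * ga)) (ee y) := by
    refine rel2 _ _ fun G _ f ha hc hd hb hdc => ?_
    have ha' := inv_can ha
    have hc' := inv_can hc
    have hd' := inv_can hd
    have hai : (f ga)⁻¹ = f ga := inv_eq_of_mul_eq_one_right ha
    have hci : (f gc)⁻¹ = f gc := inv_eq_of_mul_eq_one_right hc
    rcases y with ⟨s, v⟩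
    cases s <;> cases v <;>
      simp [rh, p0, p1, ee, hb, ha, hc, hai, hci, ha', hc', mul_assoc]
  have h3 : ∃ k, Rl u2 k (sigma (ev (p1 y))) (dl y * rh y) := by
    refine rel2 _ _ fun G _ f ha hc hd hb hdc => ?_
    rcases y with ⟨s, v⟩
    cases s <;> cases v <;> simp [rh, p1, dl, hb, hdc, mul_assoc]
  obtain ⟨k1, h1⟩ := h1
  obtain ⟨k2, h2⟩ := h2
  obtain ⟨k3, h3⟩ := h3
  exact ⟨k1 + k2 + k3, h1.to4.mono (by omega), h2.to4.mono (by omega), h3.to4.mono (by omega)⟩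

lemma eqB_aux {G : Type*} [Group G] {A C D : G} (ha : A * A = 1) (hc : C * C = 1) (hd : D * D = 1)
    (hdc : D * C = C * D) (h4 : (A * D) ^ 4 = 1) (h5 : (A * D * A * C * A * C) ^ 4 = 1) :
    D * (A * D * A) = (A * D * A) * D ∧
    D * (A * C * A * (C * (A * D * A) * C) * (A * C * A)) =
      (A * C * A * (C * (A * D * A) * C) * (A * C * A)) * D := by
  have ha' := inv_can ha
  have hc' := inv_can hc
  have hd' := inv_can hd
  have hai : A⁻¹ = A := inv_eq_of_mul_eq_one_right ha
  have hci : C⁻¹ = C := inv_eq_of_mul_eq_one_right hc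
  have hdi : D⁻¹ = D := inv_eq_of_mul_eq_one_right hd
  constructor
  · have := sq_comm4 ha hd h4
    simp only [mul_assoc]; exact this.symm
  · set t := A * C * A * (C * (A * D * A) * C) * (A * C * A) with ht
    have h6 : (D * t) * (D * t) = 1 := by
      have : (D * t) * (D * t) = A * (A * D * A * C * A * C) ^ 4 * A := by
        rw [ht]; simp [pow_succ, mul_assoc, ha']
      rw [this, h5, mul_one, ha]
    have hti : t⁻¹ = t := by
      rw [ht]; simp [mul_assoc, hai, hci, hdi]
    have h7 := eq_inv_of_mul_eq_one_left h6
    rw [mul_inv_rev, hti, hdi] at h7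
    exact h7

lemma eqB (y : HL) (j : Fin 4) : ∃ k, Rl u4 k (dl y * tt j) (tt j * dl y) := by
  refine rel4 _ _ fun G _ f ha hc hd hb hdc h4 h5 h6 => ?_
  obtain ⟨e0, e2⟩ := eqB_aux ha hc hd hdc h4 h5
  have key : ∀ j, f gd * f (tt j) = f (tt j) * f gd := by
    have aux : ∀ z : G, f gd * z = z * f gd → f gd * (f gc * z * f gc) = (f gc * z * f gc) * f gd := by
      intro z hz
      calc f gd * (f gc * z * f gc) = (f gd * f gc) * z * f gc := by group
        _ = f gc * (f gd * z) * f gc := by rw [hdc]; group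
        _ = f gc * z * (f gd * f gc) := by rw [hz]; group
        _ = _ := by rw [hdc]; group
    intro j
    fin_cases j
    · simpa [tt] using e0
    · simpa [tt] using aux _ e0
    · simpa [tt] using e2
    · simpa [tt] using aux _ e2
  rcases y with ⟨s, v⟩
  cases s <;> cases v <;> simp [dl, key]

lemma eqC_c : ∀ j, ∃ j', ∃ k, Rl u4 k (gc * tt j) (tt j' * gc) ∧ Rl u4 k (gc * tt j') (tt j * gc) := by
  have h0 : ∃ k, Rl u4 k (gc * tt 0) (tt 1 * gc) := by
    refine rel4 _ _ fun G _ f ha hc hd hb hdc h4 h5 h6 => ?_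
    simp [tt, mul_assoc, hc]
  have h1 : ∃ k, Rl u4 k (gc * tt 1) (tt 0 * gc) := by
    refine rel4 _ _ fun G _ f ha hc hd hb hdc h4 h5 h6 => ?_
    have hc' := inv_can hc
    simp [tt, mul_assoc, hc']
  have h2 : ∃ k, Rl u4 k (gc * tt 2) (tt 3 * gc) := by
    refine rel4 _ _ fun G _ f ha hc hd hb hdc h4 h5 h6 => ?_
    simp [tt, mul_assoc, hc]
  have h3 : ∃ k, Rl u4 k (gc * tt 3) (tt 2 * gc) := by
    refine rel4 _ _ fun G _ f ha hc hd hb hdc h4 h5 h6 => ?_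
    have hc' := inv_can hc
    simp [tt, mul_assoc, hc']
  obtain ⟨k0, h0⟩ := h0
  obtain ⟨k1, h1⟩ := h1
  obtain ⟨k2, h2⟩ := h2
  obtain ⟨k3, h3⟩ := h3
  intro j
  fin_cases j
  · exact ⟨1, k0 + k1, h0.mono (by omega), h1.mono (by omega)⟩
  · exact ⟨0, k0 + k1, h1.mono (by omega), h0.mono (by omega)⟩
  · exact ⟨3, k2 + k3, h2.mono (by omega), h3.mono (by omega)⟩
  · exact ⟨2, k2 + k3, h3.mono (by omega), h2.mono (by omega)⟩

lemma eqC_s : ∀ j, ∃ j', ∃ k, Rl u4 k ((ga * gc * ga) * tt j) (tt j' * (ga * gc * ga)) ∧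
    Rl u4 k ((ga * gc * ga) * tt j') (tt j * (ga * gc * ga)) := by
  have h0 : ∃ k, Rl u4 k ((ga * gc * ga) * tt 0) (tt 0 * (ga * gc * ga)) := by
    refine rel4 _ _ fun G _ f ha hc hd hb hdc h4 h5 h6 => ?_
    have ha' := inv_can ha
    have hdc' : ∀ z, f gd * (f gc * z) = f gc * (f gd * z) := by
      intro z; rw [← mul_assoc, hdc, mul_assoc]
    simp [tt, mul_assoc, ha', hdc']
  have h1 : ∃ k, Rl u4 k ((ga * gc * ga) * tt 1) (tt 2 * (ga * gc * ga)) := by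
    refine rel4 _ _ fun G _ f ha hc hd hb hdc h4 h5 h6 => ?_
    have ha' := inv_can ha
    have hc' := inv_can hc
    simp [tt, mul_assoc, ha, ha', hc']
  have h2 : ∃ k, Rl u4 k ((ga * gc * ga) * tt 2) (tt 1 * (ga * gc * ga)) := by
    refine rel4 _ _ fun G _ f ha hc hd hb hdc h4 h5 h6 => ?_
    have ha' := inv_can ha
    have hc' := inv_can hc
    simp [tt, mul_assoc, ha', hc']
  have h3 : ∃ k, Rl u4 k ((ga * gc * ga) * tt 3) (tt 3 * (ga * gc * ga)) := by
    refine rel4 _ _ fun G _ f ha hc hd hb hdc h4 h5 h6 => ?_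
    have ha' := inv_can ha
    have hc' := inv_can hc
    have hst : (f ga * f gc * f ga) * (f ga * f gd * f ga) =
        (f ga * f gd * f ga) * (f ga * f gc * f ga) := by
      have hdc' : ∀ z, f gd * (f gc * z) = f gc * (f gd * z) := by
        intro z; rw [← mul_assoc, hdc, mul_assoc]
      simp [mul_assoc, ha', hdc']
    have hs : (f ga * f gc * f ga) * (f ga * f gc * f ga) = 1 := by
      simp [mul_assoc, ha, ha', hc']
    simp only [tt, map_mul]
    generalize f ga * f gc * f ga = s at *
    generalize f ga * f gd * f ga = t at *
    generalize f gc = c at *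
    have hsc := sq_comm4 hs hc h6
    have hs' := inv_can hs
    have e1 : ∀ z, s * (c * (s * (c * z))) = c * (s * (c * (s * z))) := by
      intro z
      have := congrArg (· * z) hsc
      simpa [mul_assoc] using this
    have hst' : ∀ z, s * (t * z) = t * (s * z) := by
      intro z; rw [← mul_assoc, hst, mul_assoc]
    simp only [mul_assoc]
    rw [e1, hst', ← hsc]
  obtain ⟨k0, h0⟩ := h0
  obtain ⟨k1, h1⟩ := h1
  obtain ⟨k2, h2⟩ := h2
  obtain ⟨k3, h3⟩ := h3
  intro j
  fin_cases j
  · exact ⟨0, k0, h0, h0⟩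
  · exact ⟨2, k1 + k2, h1.mono (by omega), h2.mono (by omega)⟩
  · exact ⟨1, k1 + k2, h2.mono (by omega), h1.mono (by omega)⟩
  · exact ⟨3, k3, h3, h3⟩

lemma eqC (y : HL) (j : Fin 4) : ∃ j', ∃ k, Rl u4 k (rh y * tt j') (tt j * rh y) := by
  rcases y with ⟨s, v⟩
  have h1 : ∃ j', ∃ k, Rl u4 k (1 * tt j') (tt j * 1) :=
    ⟨j, 0, by simpa using Rl.refl _⟩
  obtain ⟨jc, kc, -, hc⟩ := eqC_c j
  obtain ⟨js, ks, -, hs⟩ := eqC_s j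
  cases s <;> cases v
  · exact ⟨jc, kc, hc⟩
  · exact ⟨jc, kc, hc⟩
  · exact h1
  · exact ⟨js, ks, hs⟩
  · exact ⟨js, ks, hs⟩
  · exact h1

def mc : Fin 8 → Fin 8 := ![1, 0, 4, 5, 2, 3, 7, 6]
def ms : Fin 8 → Fin 8 := ![2, 3, 0, 1, 6, 7, 4, 5]

lemma eqD (y : HL) (j : Fin 8) : ∃ j', ∃ k, Rl u4 k (rh y * uu j) (uu j') := by
  have hc : ∃ k, Rl u4 k (gc * uu j) (uu (mc j)) := by
    refine rel4 _ _ fun G _ f ha hc hd hb hdc h4 h5 h6 => ?_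
    have ha' := inv_can ha
    have hc' := inv_can hc
    have hs : (f ga * f gc * f ga) * (f ga * f gc * f ga) = 1 := by
      simp [mul_assoc, ha, ha', hc']
    have hsc := sq_comm4 hs hc h6
    simp only [mul_assoc] at hsc
    fin_cases j <;> simp [uu, mc, mul_assoc, hc, hc', hsc]
  have hs : ∃ k, Rl u4 k ((ga * gc * ga) * uu j) (uu (ms j)) := by
    refine rel4 _ _ fun G _ f ha hc hd hb hdc h4 h5 h6 => ?_
    have ha' := inv_can ha
    have hc' := inv_can hc
    have hs : (f ga * f gc * f ga) * (f ga * f gc * f ga) = 1 := by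
      simp [mul_assoc, ha, ha', hc']
    have hs' := inv_can hs
    simp only [mul_assoc] at hs hs'
    fin_cases j <;> simp [uu, ms, mul_assoc, hc', ha, ha']
  rcases y with ⟨s, v⟩
  obtain ⟨kc, hc⟩ := hc
  obtain ⟨ks, hs⟩ := hs
  have h1 : ∃ j', ∃ k, Rl u4 k (1 * uu j) (uu j') :=
    ⟨j, 0, by simpa using Rl.refl _⟩
  cases s <;> cases v
  · exact ⟨_, kc, hc⟩
  · exact ⟨_, kc, hc⟩
  · exact h1
  · exact ⟨_, ks, hs⟩
  · exact ⟨_, ks, hs⟩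
  · exact h1


abbrev NN : Subgroup F4 := Subgroup.normalClosure Rinf

lemma TT_sub {i : ℕ} {r : F4} (h : r ∈ TT i) : r ∈ Rinf := by
  match i, h with
  | 0, h => simp only [TT, Set.mem_singleton_iff] at h; subst h; simp [Rinf]
  | 1, h =>
    simp only [TT, Set.mem_insert_iff, Set.mem_singleton_iff] at h
    left; left
    simp only [Set.mem_insert_iff, Set.mem_singleton_iff]
    tauto
  | (i + 2), h =>
    simp only [TT, Set.mem_insert_iff, Set.mem_singleton_iff] at h
    rcases h with h | h
    · left; right; exact ⟨i, h⟩
    · right; exact ⟨i, h⟩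

lemma Cst.mem {v : ℕ → ℕ} {g : F4} (h : Cst v g) : g ∈ NN := by
  have hn : NN.Normal := Subgroup.normalClosure_normal
  induction h with
  | one v => exact NN.one_mem
  | mul _ _ _ h1 h2 => exact NN.mul_mem h1 h2
  | rel i x hr _ => exact hn.conj_mem _ (Subgroup.subset_normalClosure (TT_sub hr)) x
  | irel i x hr _ =>
    exact hn.conj_mem _ (NN.inv_mem (Subgroup.subset_normalClosure (TT_sub hr))) x

lemma Rl.mem_iff {u : ℕ → ℕ} {k : ℕ} {x y : F4} (h : Rl u k x y) (hx : x ∈ NN) : y ∈ NN := by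
  have h1 := Cst.mem h
  have h2 := NN.mul_mem (NN.inv_mem h1) hx
  simpa using h2

lemma four {G : Type*} [Group G] {s t : G} (hs : s * s = 1) (ht : t * t = 1)
    (hst : (s * t) ^ 4 = 1) (f : F4 →* G) (hf : ∀ x, f (gen x) = 1 ∨ f (gen x) = s ∨ f (gen x) = t)
    (g : F4) : f g ^ 4 = 1 := by
  have hsi : s⁻¹ = s := inv_eq_of_mul_eq_one_right hs
  have hti : t⁻¹ = t := inv_eq_of_mul_eq_one_right ht
  have hsc : SemiconjBy s (s * t) (s * t)⁻¹ := by
    unfold SemiconjBy; rw [mul_inv_rev, hsi, hti, ← mul_assoc, hs, one_mul, mul_assoc, hs, mul_one]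
  have hj : ∀ j : ℤ, s * (s * t) ^ j = (s * t) ^ (-j) * s := by
    intro j
    have := hsc.zpow_right j
    rw [zpow_neg, ← inv_zpow]; exact this
  have hgen : ∀ x, ∃ i : ℤ, f (gen x) = (s * t) ^ i ∨ f (gen x) = (s * t) ^ i * s := by
    intro x
    rcases hf x with h | h | h
    · exact ⟨0, Or.inl (by simpa using h)⟩
    · exact ⟨0, Or.inr (by simpa using h)⟩
    · refine ⟨-1, Or.inr ?_⟩
      rw [h]; simp [hsi, hti, mul_assoc, hs]
  have key : ∀ g, ∃ i : ℤ, f g = (s * t) ^ i ∨ f g = (s * t) ^ i * s := by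
    intro g
    induction g using FreeGroup.induction_on with
    | C1 => exact ⟨0, Or.inl (by simp)⟩
    | of x => exact hgen x
    | inv_of x _ =>
      obtain ⟨i, h | h⟩ := hgen x
      · exact ⟨-i, Or.inl (by
          have : f (FreeGroup.of x) = (s * t) ^ i := h
          rw [map_inv, this, zpow_neg])⟩
      · exact ⟨i, Or.inr (by
          have : f (FreeGroup.of x) = (s * t) ^ i * s := h
          rw [map_inv, this, mul_inv_rev, hsi, ← zpow_neg, hj, neg_neg])⟩
    | mul x y hx hy =>
      obtain ⟨i, h | h⟩ := hx <;> obtain ⟨j, h' | h'⟩ := hy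
      · exact ⟨i + j, Or.inl (by rw [map_mul, h, h', zpow_add])⟩
      · exact ⟨i + j, Or.inr (by rw [map_mul, h, h', zpow_add, mul_assoc])⟩
      · exact ⟨i + -j, Or.inr (by rw [map_mul, h, h', zpow_add, mul_assoc, hj, mul_assoc])⟩
      · exact ⟨i + -j, Or.inl (by
          rw [map_mul, h, h', zpow_add, mul_assoc, ← mul_assoc s, hj, mul_assoc, hs, mul_one])⟩
  obtain ⟨i, h | h⟩ := key g
  · rw [h]
    calc ((s * t) ^ i) ^ 4 = ((s * t) ^ 4) ^ i := by
          rw [← zpow_natCast, ← zpow_natCast, ← zpow_mul, ← zpow_mul, mul_comm]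
      _ = 1 := by rw [hst, one_zpow]
  · have h2 : f g * f g = 1 := by
      rw [h, mul_assoc, ← mul_assoc s, hj, mul_assoc, hs, mul_one, ← zpow_add]; simp
    calc f g ^ 4 = (f g * f g) * (f g * f g) := by simp [pow_succ, mul_assoc]
      _ = 1 := by rw [h2, one_mul]

lemma kill {G : Type*} [Group G] (f : F4 →* G) (ha : f ga * f ga = 1) (hb : f gb * f gb = 1)
    (hc : f gc * f gc = 1) (hd : f gd * f gd = 1) (hbcd : f gb * f gc * f gd = 1)
    (h1 : f r1 = 1) (h2 : f r2 = 1) (h4 : ∀ h, h ^ 4 ∈ NN → f (sigma (h ^ 4)) = 1) (g : F4)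
    (hg : g ∈ NN) : f g = 1 := by
  have : NN ≤ f.ker := by
    refine Subgroup.normalClosure_le_normal ?_
    rintro r ((hr | ⟨i, rfl⟩) | ⟨i, rfl⟩)
    · simp only [Set.mem_insert_iff, Set.mem_singleton_iff] at hr
      change f r = 1
      rcases hr with rfl | rfl | rfl | rfl | rfl <;> simp [pow_two, *]
    · cases i with
      | zero => exact h1
      | succ i =>
        change f _ = 1
        have hm : (⇑sigma)^[i] ((ga * gd) ^ 4) ∈ NN :=
          Subgroup.subset_normalClosure (Or.inl (Or.inr ⟨i, rfl⟩))
        rw [Function.iterate_succ_apply']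
        rw [iterate_map_pow] at hm ⊢
        exact h4 _ hm
    · cases i with
      | zero => exact h2
      | succ i =>
        change f _ = 1
        have hm : (⇑sigma)^[i] ((ga * gd * ga * gc * ga * gc) ^ 4) ∈ NN :=
          Subgroup.subset_normalClosure (Or.inr ⟨i, rfl⟩)
        rw [Function.iterate_succ_apply']
        rw [iterate_map_pow] at hm ⊢
        exact h4 _ hm
  exact this hg

open DihedralGroup in
def theta : F4 →* DihedralGroup 8 :=
  FreeGroup.lift fun x => match x with
    | L4.a => sr 0
    | L4.b => sr 1
    | L4.c => sr 1
    | L4.d => 1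

@[simp] lemma theta_a : theta ga = DihedralGroup.sr 0 := by simp [theta, ga]
@[simp] lemma theta_b : theta gb = DihedralGroup.sr 1 := by simp [theta, gb]
@[simp] lemma theta_c : theta gc = DihedralGroup.sr 1 := by simp [theta, gc]
@[simp] lemma theta_d : theta gd = 1 := by simp [theta, gd]

lemma theta_NN (g : F4) (hg : g ∈ NN) : theta g = 1 := by
  refine kill theta ?_ ?_ ?_ ?_ ?_ ?_ ?_ ?_ g hg
  · rw [theta_a]; decide
  · rw [theta_b]; decide
  · rw [theta_c]; decide
  · rw [theta_d]; decide
  · rw [theta_b, theta_c, theta_d]; decide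
  · simp only [r1, map_pow, map_mul, theta_a, theta_d]; decide
  · simp only [r2, map_pow, map_mul, theta_a, theta_d, theta_c]; decide
  · intro h _
    rw [map_pow, map_pow]
    refine four (s := DihedralGroup.sr 7) (t := DihedralGroup.sr 1) (by decide) (by decide)
      (by decide) (theta.comp sigma) ?_ h
    intro x
    cases x
    · right; left
      simp only [MonoidHom.comp_apply, gen_a, sigma_a, map_mul, theta_a, theta_c]; decide
    · left; simp
    · right; right; simp
    · right; right; simp

abbrev QQ : Type := F4 ⧸ NN
def mkQ : F4 →* QQ := QuotientGroup.mk' NN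

lemma mkQ_eq {g : F4} : mkQ g = 1 ↔ g ∈ NN := QuotientGroup.eq_one_iff g

lemma mkQ_rel : mkQ ga * mkQ ga = 1 ∧ mkQ gb * mkQ gb = 1 ∧ mkQ gc * mkQ gc = 1 ∧
    mkQ gd * mkQ gd = 1 ∧ mkQ gb * (mkQ gc * mkQ gd) = 1 ∧ (mkQ ga * mkQ gd) ^ 4 = 1 := by
  have h : ∀ r ∈ Rinf, mkQ r = 1 := fun r hr => mkQ_eq.2 (Subgroup.subset_normalClosure hr)
  refine ⟨?_, ?_, ?_, ?_, ?_, ?_⟩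
  · have := h (ga ^ 2) (by simp [Rinf]); rwa [pow_two, map_mul] at this
  · have := h (gb ^ 2) (by simp [Rinf]); rwa [pow_two, map_mul] at this
  · have := h (gc ^ 2) (by simp [Rinf]); rwa [pow_two, map_mul] at this
  · have := h (gd ^ 2) (by simp [Rinf]); rwa [pow_two, map_mul] at this
  · have := h (gb * gc * gd) (by simp [Rinf]); rwa [map_mul, map_mul, mul_assoc] at this
  · have := h ((ga * gd) ^ 4) (Or.inl (Or.inr ⟨0, rfl⟩)); rwa [map_pow, map_mul] at this

noncomputable def pv (v : V3) : Equiv.Perm (Bool × QQ) :=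
  Equiv.prodShear (Equiv.refl _) (fun s => Equiv.mulLeft (mkQ (ev (p1 (!s, v)))))

noncomputable def Phi : F4 →* Equiv.Perm (Bool × QQ) :=
  FreeGroup.lift fun x => match x with
    | L4.a => Equiv.prodShear Equiv.boolNot (fun _ => Equiv.refl _)
    | L4.b => pv .b
    | L4.c => pv .c
    | L4.d => pv .d

lemma Phi_a (s : Bool) (q : QQ) : Phi ga (s, q) = (!s, q) := by simp [Phi, ga]
lemma Phi_b (s : Bool) (q : QQ) : Phi gb (s, q) = (s, mkQ (ev (p1 (!s, .b))) * q) := by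
  simp [Phi, gb, pv]
lemma Phi_c (s : Bool) (q : QQ) : Phi gc (s, q) = (s, mkQ (ev (p1 (!s, .c))) * q) := by
  simp [Phi, gc, pv]
lemma Phi_d (s : Bool) (q : QQ) : Phi gd (s, q) = (s, mkQ (ev (p1 (!s, .d))) * q) := by
  simp [Phi, gd, pv]

noncomputable def pim : F4 →* QQ :=
  FreeGroup.lift fun x => match x with
    | L4.a => mkQ gd
    | L4.b => 1
    | L4.c => mkQ ga
    | L4.d => mkQ ga

lemma pim_a : pim ga = mkQ gd := by simp [pim, ga]
lemma pim_b : pim gb = 1 := by simp [pim, gb]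
lemma pim_c : pim gc = mkQ ga := by simp [pim, gc]
lemma pim_d : pim gd = mkQ ga := by simp [pim, gd]

lemma Phi_sigma (s : Bool) (g : F4) (q : QQ) :
    Phi (sigma g) (s, q) = (s, (if s then mkQ g else pim g) * q) := by
  have hgen : ∀ (x : L4) (q : QQ),
      Phi (sigma (gen x)) (s, q) = (s, (if s then mkQ (gen x) else pim (gen x)) * q) := by
    intro x q
    cases x <;> cases s <;>
      simp [Phi_a, Phi_b, Phi_c, Phi_d, p1, pim_a, pim_b, pim_c, pim_d]
  induction g using FreeGroup.induction_on generalizing q with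
  | C1 => cases s <;> simp
  | of x => exact hgen x q
  | inv_of x _ =>
    rw [map_inv, map_inv, Equiv.Perm.inv_eq_iff_eq, map_inv, map_inv]
    have := hgen x
    unfold gen at this
    rw [this]
    cases s <;> simp
  | mul x y hx hy =>
    rw [map_mul, map_mul, Equiv.Perm.mul_apply, hy, hx, map_mul, map_mul]
    cases s <;> simp [mul_assoc]

lemma Phi_NN (g : F4) (hg : g ∈ NN) : Phi g = 1 := by
  obtain ⟨ha, hb, hc, hd, hbcd, had⟩ := mkQ_rel
  have ha' := inv_can ha
  have hb' := inv_can hb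
  have hc' := inv_can hc
  have hd' := inv_can hd
  have hx : ∀ z, mkQ gc * (mkQ gd * (mkQ gb * z)) = z := by
    intro z
    have h1 : mkQ gc * mkQ gd = mkQ gb := by
      have := congrArg (mkQ gb * ·) hbcd
      simpa only [hb', mul_one] using this
    rw [← mul_assoc, h1, hb']
  refine kill Phi ?_ ?_ ?_ ?_ ?_ ?_ ?_ ?_ g hg
  · ext1 ⟨s, q⟩; simp [Phi_a]
  · ext1 ⟨s, q⟩
    cases s <;> simp [Phi_b, p1, ha', hc']
  · ext1 ⟨s, q⟩
    cases s <;> simp [Phi_c, p1, ha', hd']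
  · ext1 ⟨s, q⟩
    cases s <;> simp [Phi_d, p1, hb']
  · ext1 ⟨s, q⟩
    cases s <;> simp [Phi_b, Phi_c, Phi_d, p1, ha', hx]
  · ext1 ⟨s, q⟩
    cases s <;> simp [r1, pow_succ, Phi_a, Phi_d, p1, hb']
  · ext1 ⟨s, q⟩
    cases s <;> simp [r2, pow_succ, Phi_a, Phi_d, Phi_c, p1, ha', hb', hd']
  · intro h hm
    ext1 ⟨s, q⟩
    rw [Phi_sigma]
    have h4 : pim h ^ 4 = 1 := by
      refine four ha hd had pim ?_ h
      intro x
      cases x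
      · right; right; exact pim_a
      · left; exact pim_b
      · right; left; exact pim_c
      · right; left; exact pim_d
    cases s
    · simp [h4]
    · simp only [if_true, mkQ_eq.2 hm]; simp

lemma Phi_yv (y : HL) (q : QQ) : Phi (yv y) (true, q) = (true, mkQ (ev (p1 y)) * q) ∧
    Phi (yv y) (false, q) = (false, mkQ (ev (p0 y)) * q) := by
  rcases y with ⟨s, v⟩
  cases s <;> cases v <;>
    simp [yv, V3.l, p0, Phi_a, Phi_b, Phi_c, Phi_d]

lemma Phi_evY (Y : List HL) (q : QQ) :
    Phi (evY Y) (true, q) = (true, mkQ (ev (Y.flatMap p1)) * q) ∧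
    Phi (evY Y) (false, q) = (false, mkQ (ev (Y.flatMap p0)) * q) := by
  induction Y with
  | nil => simp
  | cons y Y ih =>
    simp only [evY_cons, map_mul, Equiv.Perm.mul_apply, ih.1, ih.2, (Phi_yv y _).1, (Phi_yv y _).2,
      List.flatMap_cons, ev_append, mul_assoc, and_self]

lemma split_NN {Y : List HL} (h : evY Y ∈ NN) :
    ev (Y.flatMap p1) ∈ NN ∧ ev (Y.flatMap p0) ∈ NN := by
  have h1 := Phi_NN _ h
  have h2 := Phi_evY Y 1
  rw [h1] at h2
  simp only [Equiv.Perm.one_apply, mul_one, Prod.mk.injEq, true_and] at h2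
  exact ⟨mkQ_eq.1 h2.1.symm, mkQ_eq.1 h2.2.symm⟩

lemma odd_NN {Y : List HL} (h : evY Y * ga ∈ NN) : False := by
  have h1 := Phi_NN _ h
  have h2 : Phi (evY Y * ga) (false, 1) = (false, 1) := by rw [h1]; rfl
  rw [map_mul, Equiv.Perm.mul_apply, Phi_a] at h2
  have h3 := (Phi_evY Y 1).1
  simp only [Bool.not_false, h3, Prod.mk.injEq] at h2
  exact absurd h2.1 (by decide)

lemma theta_rY (Y : List HL) : theta (rY Y) = theta (evY Y) := by
  induction Y with
  | nil => rfl
  | cons y Y ih =>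
    simp only [rY_cons, evY_cons, map_mul, ih]
    congr 1
    rcases y with ⟨s, v⟩
    cases s <;> cases v <;> simp [rh, yv, V3.l]


lemma key_facts : ∃ K : ℕ, (∀ y, Rl u4 K (yv y) (sigma (ev (p1 y)) * ee y) ∧
    Rl u4 K ((rh y)⁻¹ * (ga * sigma (ev (p0 y)) * ga)) (ee y) ∧
    Rl u4 K (sigma (ev (p1 y))) (dl y * rh y)) ∧
    (∀ y j, Rl u4 K (dl y * tt j) (tt j * dl y)) ∧
    (∀ y j, ∃ j', Rl u4 K (rh y * tt j') (tt j * rh y)) ∧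
    (∀ y j, ∃ j', Rl u4 K (rh y * uu j) (uu j')) ∧
    Rl u4 K (ga * ga) 1 ∧ Rl u4 K ga⁻¹ ga := by
  obtain ⟨k1, h1⟩ := fin_ex (P := fun y k => Rl u4 k (yv y) (sigma (ev (p1 y)) * ee y) ∧
    Rl u4 k ((rh y)⁻¹ * (ga * sigma (ev (p0 y)) * ga)) (ee y) ∧
    Rl u4 k (sigma (ev (p1 y))) (dl y * rh y))
    (fun y k l hkl h => ⟨h.1.mono hkl, h.2.1.mono hkl, h.2.2.mono hkl⟩) eqA
  obtain ⟨k2, h2⟩ := fin_ex (P := fun (p : HL × Fin 4) k =>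
    Rl u4 k (dl p.1 * tt p.2) (tt p.2 * dl p.1))
    (fun y k l hkl h => h.mono hkl) (fun p => eqB p.1 p.2)
  obtain ⟨k3, h3⟩ := fin_ex (P := fun (p : HL × Fin 4) k =>
    ∃ j', Rl u4 k (rh p.1 * tt j') (tt p.2 * rh p.1))
    (fun y k l hkl ⟨j', h⟩ => ⟨j', h.mono hkl⟩) (fun p => exists_comm.1 (eqC p.1 p.2))
  obtain ⟨k4, h4⟩ := fin_ex (P := fun (p : HL × Fin 8) k =>
    ∃ j', Rl u4 k (rh p.1 * uu p.2) (uu j'))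
    (fun y k l hkl ⟨j', h⟩ => ⟨j', h.mono hkl⟩) (fun p => exists_comm.1 (eqD p.1 p.2))
  obtain ⟨k5, h5⟩ : ∃ k, Rl u2 k (ga * ga) 1 := rel2 _ _ fun G _ f ha hc hd hb hdc => by
    simp [ha]
  obtain ⟨k6, h6⟩ : ∃ k, Rl u2 k ga⁻¹ ga := rel2 _ _ fun G _ f ha hc hd hb hdc => by
    rw [map_inv]; exact inv_eq_of_mul_eq_one_right ha
  refine ⟨k1 + k2 + k3 + k4 + k5 + k6, fun y => ⟨(h1 y).1.mono (by omega), (h1 y).2.1.mono (by omega),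
    (h1 y).2.2.mono (by omega)⟩, fun y j => (h2 (y, j)).mono (by omega), fun y j => ?_,
    fun y j => ?_, h5.to4.mono (by omega), h6.to4.mono (by omega)⟩
  · obtain ⟨j', h⟩ := h3 (y, j)
    exact ⟨j', h.mono (by omega)⟩
  · obtain ⟨j', h⟩ := h4 (y, j)
    exact ⟨j', h.mono (by omega)⟩

def ZZ (Y : List HL) : F4 := sigma (ev (Y.flatMap p1)) * (rY Y)⁻¹

lemma ZZ_cons (y : HL) (Y : List HL) : ZZ (y :: Y) = sigma (ev (p1 y)) * ZZ Y * (rh y)⁻¹ := by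
  simp [ZZ, mul_assoc]

lemma key_comm : ∃ K : ℕ, ∀ Y j, Rl u4 (K * Y.length) (ZZ Y * tt j) (tt j * ZZ Y) := by
  obtain ⟨k, hA, hB, hC, -⟩ := key_facts
  refine ⟨5 * k, fun Y => ?_⟩
  induction Y with
  | nil => intro j; simpa [ZZ] using Rl.refl _
  | cons y Y ih =>
    intro j
    obtain ⟨j', hj⟩ := hC y j
    have ih := ih j'
    rw [ZZ_cons]
    have hA := (hA y).2.2
    have hB := hB y j
    generalize sigma (ev (p1 y)) = s at *
    generalize rh y = r at *
    generalize dl y = δ at *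
    generalize tt j = t at *
    generalize tt j' = t' at *
    generalize ZZ Y = Z at *
    have c1 : Rl u4 k (s * Z * r⁻¹ * t) (s * (Z * t') * r⁻¹) := by
      have := ((hj.symm.mul_left r⁻¹).mul_right r⁻¹).mul_left (s * Z)
      convert this using 1 <;> group
    have c2 : Rl u4 (5 * k * Y.length) (s * (Z * t') * r⁻¹) (s * (t' * Z) * r⁻¹) :=
      (ih.mul_left s).mul_right r⁻¹
    have c3 : Rl u4 k (s * (t' * Z) * r⁻¹) (δ * (r * t') * Z * r⁻¹) := by
      have := hA.mul_right (t' * Z * r⁻¹)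
      convert this using 1 <;> group
    have c4 : Rl u4 k (δ * (r * t') * Z * r⁻¹) (δ * (t * r) * Z * r⁻¹) :=
      ((hj.mul_left δ).mul_right Z).mul_right r⁻¹
    have c5 : Rl u4 k (δ * (t * r) * Z * r⁻¹) (t * (δ * r) * Z * r⁻¹) := by
      have := hB.mul_right (r * Z * r⁻¹)
      convert this using 1 <;> group
    have c6 : Rl u4 k (t * (δ * r) * Z * r⁻¹) (t * (s * Z * r⁻¹)) := by
      have := (hA.symm.mul_left t).mul_right (Z * r⁻¹)
      convert this using 1 <;> group
    refine (c1.trans (c2.trans (c3.trans (c4.trans (c5.trans c6))))).mono ?_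
    rw [List.length_cons]; ring_nf; omega

lemma key_main : ∃ K : ℕ, ∀ Y, Rl u4 (K * (Y.length + 1) ^ 2) (evY Y)
    (ZZ Y * (ga * sigma (ev (Y.flatMap p0)) * ga)) := by
  obtain ⟨k, hA, -, -, -, haa, -⟩ := key_facts
  obtain ⟨k1, hcomm⟩ := key_comm
  refine ⟨3 * k + k1, fun Y => ?_⟩
  induction Y with
  | nil => simpa [ZZ] using (haa.mono (show k ≤ 3 * k + k1 by omega)).symm
  | cons y Y ih =>
    obtain ⟨h1, h2, -⟩ := hA y
    have he : Rl u4 (k1 * Y.length) (ZZ Y * ee y) (ee y * ZZ Y) := by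
      rcases y with ⟨s, v⟩
      have := hcomm Y 0
      have hone : Rl u4 (k1 * Y.length) (ZZ Y * 1) (1 * ZZ Y) := by simpa using Rl.refl _
      cases s <;> cases v
      · exact hone
      · exact hone
      · exact hone
      · exact this
      · exact hone
      · exact this
    rw [ZZ_cons, evY_cons, List.flatMap_cons, ev_append, map_mul]
    generalize sigma (ev (p1 y)) = s at *
    generalize sigma (ev (p0 y)) = s0 at *
    generalize sigma (ev (Y.flatMap p0)) = t0 at *
    generalize rh y = r at *
    generalize ee y = e at *
    generalize yv y = g at *
    generalize ZZ Y = Z at *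
    have c1 := ih.mul_left g
    have c2 : Rl u4 k (g * (Z * (ga * t0 * ga))) (s * (e * Z) * (ga * t0 * ga)) := by
      have := h1.mul_right (Z * (ga * t0 * ga))
      convert this using 1; group
    have c3 : Rl u4 (k1 * Y.length) (s * (e * Z) * (ga * t0 * ga)) (s * (Z * e) * (ga * t0 * ga)) :=
      (he.symm.mul_left s).mul_right _
    have c4 : Rl u4 k (s * (Z * e) * (ga * t0 * ga))
        (s * Z * (r⁻¹ * (ga * s0 * ga)) * (ga * t0 * ga)) := by
      have := (h2.symm.mul_left (s * Z)).mul_right (ga * t0 * ga)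
      convert this using 1; group
    have c5 : Rl u4 k (s * Z * (r⁻¹ * (ga * s0 * ga)) * (ga * t0 * ga))
        (s * Z * r⁻¹ * (ga * (s0 * t0) * ga)) := by
      have := (haa.mul_left (s * Z * r⁻¹ * ga * s0)).mul_right (t0 * ga)
      convert this using 1 <;> simp [mul_assoc]
    refine (c1.trans (c2.trans (c3.trans (c4.trans c5)))).mono ?_
    rw [List.length_cons]; nlinarith


lemma key_rho : ∃ K : ℕ, ∀ Y, ∃ j, Rl u4 (K * Y.length) (rY Y) (uu j) := by
  obtain ⟨k, -, -, -, hD, -⟩ := key_facts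
  refine ⟨k, fun Y => ?_⟩
  induction Y with
  | nil => exact ⟨0, by simpa [uu] using Rl.refl _⟩
  | cons y Y ih =>
    obtain ⟨j, hj⟩ := ih
    obtain ⟨j', hj'⟩ := hD y j
    refine ⟨j', ?_⟩
    rw [rY_cons]
    refine ((hj.mul_left (rh y)).trans hj').mono ?_
    rw [List.length_cons, mul_add, mul_one]

lemma uu_theta (j : Fin 8) (h : theta (uu j) = 1) : j = 0 := by
  revert h
  fin_cases j <;> simp only [uu, map_mul, map_one, theta_a, theta_c] <;> decide

lemma key_split : ∃ K : ℕ, ∀ Y, evY Y ∈ NN → Rl u4 (K * (Y.length + 1) ^ 2) (evY Y)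
    (sigma (ev (Y.flatMap p1)) * (ga * sigma (ev (Y.flatMap p0)) * ga⁻¹)) := by
  obtain ⟨k, -, -, -, -, -, hai⟩ := key_facts
  obtain ⟨k1, h1⟩ := key_main
  obtain ⟨k2, h2⟩ := key_rho
  refine ⟨k + k1 + k2, fun Y hY => ?_⟩
  obtain ⟨j, hj⟩ := h2 Y
  have hj0 : j = 0 := by
    apply uu_theta
    have e1 := theta_NN _ (Cst.mem hj)
    rw [map_mul, map_inv, theta_rY, theta_NN _ hY, one_mul, inv_eq_one] at e1
    exact e1
  subst hj0
  have h1 := h1 Y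
  unfold ZZ at h1
  have c1 : Rl u4 (k2 * Y.length) (rY Y)⁻¹ 1 := by
    have := (hj.symm.mul_left (rY Y)⁻¹)
    simpa [uu] using this
  have c2 := (c1.mul_left (sigma (ev (Y.flatMap p1)))).mul_right
    (ga * sigma (ev (Y.flatMap p0)) * ga)
  have c3 := (hai.symm.mul_left (ga * sigma (ev (Y.flatMap p0)))).mul_left
    (sigma (ev (Y.flatMap p1)))
  rw [mul_one] at c2
  refine (h1.trans (c2.trans c3)).mono ?_
  nlinarith [Nat.zero_le (Y.length * k2), Nat.zero_le (Y.length * k), Nat.zero_le (Y.length ^ 2 * k2),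
    Nat.zero_le (Y.length ^ 2 * k)]

instance : Finite L4 :=
  Finite.of_surjective (fun i : Fin 4 => match i with
    | 0 => L4.a | 1 => L4.b | 2 => L4.c | 3 => L4.d) (by
    intro v; cases v
    · exact ⟨0, rfl⟩
    · exact ⟨1, rfl⟩
    · exact ⟨2, rfl⟩
    · exact ⟨3, rfl⟩)

lemma merge1 (x y : L4) (h : x = L4.a ↔ y = L4.a) : ∃ k, ∃ z : List L4,
    (z = [] ∨ ∃ z', z = [z'] ∧ (z' = L4.a ↔ y = L4.a)) ∧ Rl u2 k (gen x * gen y) (ev z) := by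
  have h1 : ∀ z : List L4, (z = [] ∨ ∃ z', z = [z'] ∧ (z' = L4.a ↔ y = L4.a)) →
      (∃ k, Rl u2 k (gen x * gen y) (ev z)) → ∃ k, ∃ z : List L4,
      (z = [] ∨ ∃ z', z = [z'] ∧ (z' = L4.a ↔ y = L4.a)) ∧ Rl u2 k (gen x * gen y) (ev z) :=
    fun z hz ⟨k, hk⟩ => ⟨k, z, hz, hk⟩
  have h2 : ∀ z : List L4, (z = [] ∨ ∃ z', z = [z'] ∧ (z' = L4.a ↔ y = L4.a)) →
      (∀ (G : Type) [Group G] (f : F4 →* G), f ga * f ga = 1 →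
      f gc * f gc = 1 → f gd * f gd = 1 → f gb = f gc * f gd → f gd * f gc = f gc * f gd →
      (∀ z, f gc * (f gc * z) = z) → (∀ z, f gd * (f gd * z) = z) →
      (∀ z, f gd * (f gc * z) = f gc * (f gd * z)) → f (gen x * gen y) = f (ev z)) →
      ∃ k, ∃ z : List L4,
      (z = [] ∨ ∃ z', z = [z'] ∧ (z' = L4.a ↔ y = L4.a)) ∧ Rl u2 k (gen x * gen y) (ev z) := by
    intro z hz H
    refine h1 z hz (rel2 _ _ fun G _ f ha hc hd hb hdc => ?_)
    exact H G f ha hc hd hb hdc (inv_can hc) (inv_can hd)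
      (by intro z; rw [← mul_assoc, hdc, mul_assoc])
  cases x <;> cases y <;> simp at h
  · refine h2 [] (by simp) fun G _ f ha hc hd hb hdc hc1 hd1 hdc1 => ?_
    simp [ha, hb, hc, hd, mul_assoc, hdc, hc1, hd1, hdc1]
  · refine h2 [] (by simp) fun G _ f ha hc hd hb hdc hc1 hd1 hdc1 => ?_
    simp [ha, hb, hc, hd, mul_assoc, hdc, hc1, hd1, hdc1]
  · refine h2 [L4.d] (by simp) fun G _ f ha hc hd hb hdc hc1 hd1 hdc1 => ?_
    simp [ha, hb, hc, hd, mul_assoc, hdc, hc1, hd1, hdc1]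
  · refine h2 [L4.c] (by simp) fun G _ f ha hc hd hb hdc hc1 hd1 hdc1 => ?_
    simp [ha, hb, hc, hd, mul_assoc, hdc, hc1, hd1, hdc1]
  · refine h2 [L4.d] (by simp) fun G _ f ha hc hd hb hdc hc1 hd1 hdc1 => ?_
    simp [ha, hb, hc, hd, mul_assoc, hdc, hc1, hd1, hdc1]
  · refine h2 [] (by simp) fun G _ f ha hc hd hb hdc hc1 hd1 hdc1 => ?_
    simp [ha, hb, hc, hd, mul_assoc, hdc, hc1, hd1, hdc1]
  · refine h2 [L4.b] (by simp) fun G _ f ha hc hd hb hdc hc1 hd1 hdc1 => ?_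
    simp [ha, hb, hc, hd, mul_assoc, hdc, hc1, hd1, hdc1]
  · refine h2 [L4.c] (by simp) fun G _ f ha hc hd hb hdc hc1 hd1 hdc1 => ?_
    simp [ha, hb, hc, hd, mul_assoc, hdc, hc1, hd1, hdc1]
  · refine h2 [L4.b] (by simp) fun G _ f ha hc hd hb hdc hc1 hd1 hdc1 => ?_
    simp [ha, hb, hc, hd, mul_assoc, hdc, hc1, hd1, hdc1]
  · refine h2 [] (by simp) fun G _ f ha hc hd hb hdc hc1 hd1 hdc1 => ?_
    simp [ha, hb, hc, hd, mul_assoc, hdc, hc1, hd1, hdc1]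

abbrev Alt (w : List L4) : Prop := List.IsChain (fun x y => ¬ (x = L4.a ↔ y = L4.a)) w

lemma Alt_count (w : List L4) (h : Alt w) : 2 * w.countP (· ≠ L4.a) ≤ w.length + 1 ∧
    (w.head? = some L4.a → 2 * w.countP (· ≠ L4.a) ≤ w.length) := by
  induction w with
  | nil => simp
  | cons x t ih =>
    cases t with
    | nil => cases x <;> simp
    | cons y t =>
      rw [Alt, List.isChain_cons_cons] at h
      obtain ⟨i1, i2⟩ := ih h.2
      have hxy := h.1
      rw [List.countP_cons, List.length_cons]
      by_cases hx : x = L4.a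
      · subst hx
        simp only [ne_eq, decide_not, List.length_cons] at i1 ⊢; simp; omega
      · have hy : y = L4.a := by
          by_contra hy; exact hxy ⟨fun h => absurd h hx, fun h => absurd h hy⟩
        have := i2 (by simp [hy])
        simp only [ne_eq, decide_not, List.length_cons] at this ⊢
        simp [hx]; omega

lemma norml : ∃ K : ℕ, ∀ w : List L4, ∃ w', Alt w' ∧ w'.length ≤ w.length ∧
    Rl u2 (K * w.length) (ev w) (ev w') := by
  obtain ⟨K, hK⟩ := fin_ex (P := fun (p : L4 × L4) k => (p.1 = L4.a ↔ p.2 = L4.a) →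
    ∃ z : List L4, (z = [] ∨ ∃ z', z = [z'] ∧ (z' = L4.a ↔ p.2 = L4.a)) ∧
    Rl u2 k (gen p.1 * gen p.2) (ev z))
    (fun p k l hkl h hp => by
      obtain ⟨z, hz, h⟩ := h hp
      exact ⟨z, hz, h.mono hkl⟩)
    (fun p => by
      by_cases hp : (p.1 = L4.a ↔ p.2 = L4.a)
      · obtain ⟨k, h⟩ := merge1 p.1 p.2 hp
        exact ⟨k, fun _ => h⟩
      · exact ⟨0, fun h => absurd h hp⟩)
  refine ⟨K, fun w => ?_⟩
  induction w with
  | nil => exact ⟨[], by simp, by simp, Rl.refl _⟩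
  | cons x w ih =>
    obtain ⟨w', ha, hl, hr⟩ := ih
    have hr := hr.mul_left (gen x)
    rw [← ev_cons, ← ev_cons] at hr
    have hm : K * (x :: w).length = K * w.length + K := by rw [List.length_cons, mul_add, mul_one]
    cases w' with
    | nil => exact ⟨[x], by simp, by simp, hr.mono (by omega)⟩
    | cons y t =>
      by_cases hxy : (x = L4.a ↔ y = L4.a)
      · obtain ⟨z, hz, hk⟩ := hK (x, y) hxy
        have hr2 : Rl u2 K (ev (x :: y :: t)) (ev (z ++ t)) := by
          have := hk.mul_right (ev t)
          simpa [mul_assoc] using this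
        refine ⟨z ++ t, ?_, ?_, hm ▸ hr.trans hr2⟩
        · rcases hz with rfl | ⟨z', rfl, hz'⟩
          · exact List.IsChain.tail ha
          · cases t with
            | nil => simp
            | cons y' t =>
              rw [Alt, List.isChain_cons_cons] at ha
              simp only [List.cons_append, List.nil_append]
              rw [Alt, List.isChain_cons_cons]
              exact ⟨fun h => ha.1 (hz'.symm.trans h), ha.2⟩
        · rcases hz with rfl | ⟨z', rfl, hz'⟩
          · simp at hl ⊢; omega
          · simp at hl ⊢; omega
      · exact ⟨x :: y :: t, by rw [Alt, List.isChain_cons_cons]; exact ⟨hxy, ha⟩,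
          by simp at hl ⊢; omega, hr.mono (by omega)⟩

def pa (s : Bool) : F4 := if s then ga else 1

lemma conv : ∃ K : ℕ, ∀ (w : List L4) (s : Bool), ∃ (Y : List HL) (s' : Bool),
    Y.length = w.countP (· ≠ L4.a) ∧ Rl u2 (K * w.length) (pa s * ev w) (evY Y * pa s') := by
  obtain ⟨k1, h1⟩ : ∃ k, Rl u2 k (ga * ga) 1 := rel2 _ _ fun G _ f ha hc hd hb hdc => by
    simp [ha]
  have hs : ∀ s : Bool, Rl u2 k1 (pa s * ga) (pa (!s)) := by
    intro s; cases s
    · simpa [pa] using Rl.refl _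
    · simpa [pa] using h1
  have hv : ∀ (s : Bool) (v : V3), Rl u2 k1 (pa s * gen v.l) (yv (s, v) * pa s) := by
    intro s v; cases s
    · simpa [pa, yv] using Rl.refl _
    · have := (h1.symm.mul_left (ga * gen v.l))
      simpa [pa, yv, mul_assoc] using this
  refine ⟨k1, fun w => ?_⟩
  induction w with
  | nil => intro s; exact ⟨[], s, by simp, by simpa using Rl.refl _⟩
  | cons x w ih =>
    intro s
    have hm : k1 * (x :: w).length = k1 + k1 * w.length := by rw [List.length_cons]; ring
    rw [hm]
    have hcase : x = L4.a ∨ ∃ v : V3, x = v.l := by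
      cases x
      · left; rfl
      · right; exact ⟨.b, rfl⟩
      · right; exact ⟨.c, rfl⟩
      · right; exact ⟨.d, rfl⟩
    rcases hcase with rfl | ⟨v, rfl⟩
    · obtain ⟨Y, s', hl, hr⟩ := ih (!s)
      refine ⟨Y, s', by simpa using hl, ?_⟩
      have := ((hs s).mul_right (ev w)).trans hr
      simpa [mul_assoc] using this
    · obtain ⟨Y, s', hl, hr⟩ := ih s
      refine ⟨(s, v) :: Y, s', ?_, ?_⟩
      · have : v.l ≠ L4.a := by cases v <;> simp [V3.l]
        simp [this, hl]
      · have := ((hv s v).mul_right (ev w)).trans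
          (by simpa [mul_assoc] using hr.mul_left (yv (s, v)))
        simpa [mul_assoc] using this

lemma short (w : List L4) (hA : Alt w) (hl : w.length ≤ 2) (hN : ev w ∈ NN) : w = [] := by
  have ht := theta_NN _ hN
  match w, hA, hl, hN, ht with
  | [], _, _, _, _ => rfl
  | [x], _, _, hN, ht =>
    exfalso
    cases x
    · revert ht; simp only [ev_cons, ev_nil, gen_a, map_mul, theta_a, map_one]; decide
    · revert ht; simp only [ev_cons, ev_nil, gen_b, map_mul, theta_b, map_one]; decide
    · revert ht; simp only [ev_cons, ev_nil, gen_c, map_mul, theta_c, map_one]; decide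
    · have h1 : evY [(false, V3.d)] ∈ NN := by simpa [yv, V3.l] using hN
      have h2 := theta_NN _ (split_NN h1).1
      revert h2; simp only [List.flatMap_cons, List.flatMap_nil, p1, List.append_nil, ev_cons,
        ev_nil, gen_b, map_mul, theta_b, map_one]; decide
  | [x, y], hA, _, hN, ht =>
    exfalso
    rw [Alt, List.isChain_cons_cons] at hA
    have := hA.1
    revert ht
    cases x <;> cases y <;> simp at this <;>
      simp only [ev_cons, ev_nil, gen_a, gen_b, gen_c, gen_d, map_mul, theta_a, theta_b, theta_c,
        theta_d, map_one] <;> decide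
  | _ :: _ :: _ :: _, _, hl, _, _ => simp at hl

lemma base : ∃ K : ℕ, ∀ w : List L4, w.length ≤ 2 → ev w ∈ NN → Rl u2 K (ev w) 1 := by
  obtain ⟨K, hK⟩ := norml
  refine ⟨K * 2, fun w hl hN => ?_⟩
  obtain ⟨w', hA, hl', hr⟩ := hK w
  have := short w' hA (hl'.trans hl) (hr.mem_iff hN)
  subst this
  exact hr.mono (Nat.mul_le_mul_left _ hl)

lemma length_p1 (y : HL) : (p1 y).length ≤ 1 := by
  rcases y with ⟨s, v⟩; cases s <;> cases v <;> simp [p1]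

lemma length_p (Y : List HL) :
    (Y.flatMap p1).length ≤ Y.length ∧ (Y.flatMap p0).length ≤ Y.length := by
  induction Y with
  | nil => simp
  | cons y Y ih =>
    have h1 := length_p1 y
    have h2 : (p0 y).length ≤ 1 := length_p1 _
    simp only [List.flatMap_cons, List.length_append, List.length_cons]; omega

lemma step : ∃ K : ℕ, ∀ (n : ℕ) (w : List L4), 2 ≤ n → w.length ≤ n + 1 → ev w ∈ NN →
    ∃ w0 w1 : List L4, w0.length ≤ n / 2 + 1 ∧ w1.length ≤ n / 2 + 1 ∧ ev w0 ∈ NN ∧ ev w1 ∈ NN ∧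
    Rl u4 (K * n ^ 2) (ev w) (sigma (ev w1) * (ga * sigma (ev w0) * ga⁻¹)) := by
  obtain ⟨k1, h1⟩ := norml
  obtain ⟨k2, h2⟩ := conv
  obtain ⟨k3, h3⟩ := key_split
  refine ⟨2 * k1 + 2 * k2 + 4 * k3, fun n w hn hl hN => ?_⟩
  obtain ⟨w', hA, hl', hr1⟩ := h1 w
  obtain ⟨Y, s', hY, hr2⟩ := h2 w' false
  have hc := (Alt_count w' hA).1
  have hr := hr1.trans (by simpa [pa] using hr2)
  have hm := hr.mem_iff hN
  cases s' with
  | true => exact (odd_NN (Y := Y) (by simpa [pa] using hm)).elim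
  | false =>
    simp only [Bool.false_eq_true, if_false, mul_one] at hm hr
    obtain ⟨n1, n0⟩ := split_NN hm
    obtain ⟨l1, l0⟩ := length_p Y
    have hYl : Y.length ≤ n / 2 + 1 := by omega
    refine ⟨_, _, l0.trans hYl, l1.trans hYl, n0, n1, (hr.to4.trans (h3 Y hm)).mono ?_⟩
    have e1 : w.length ≤ 2 * n ^ 2 := by nlinarith
    have e2 : w'.length ≤ 2 * n ^ 2 := by nlinarith
    have e3 : (Y.length + 1) ^ 2 ≤ 4 * n ^ 2 := by
      have : Y.length + 1 ≤ 2 * n := by omega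
      nlinarith
    have f1 := Nat.mul_le_mul_left k1 e1
    have f2 := Nat.mul_le_mul_left k2 e2
    have f3 := Nat.mul_le_mul_left k3 e3
    nlinarith


lemma main_rec : ∃ K : ℕ, ∀ (l : ℕ), 1 ≤ l → ∀ w : List L4, w.length ≤ l + 1 → ev w ∈ NN →
    ∃ v, Cst v (ev w) ∧ v 0 ≤ K * l ^ 2 * (Nat.log 2 l + 1) ∧ v 1 ≤ K * l ^ 2 * (Nat.log 2 l + 1) ∧
      v 2 ≤ K * l ^ 2 ∧ (∀ i, 2 ^ i * v (i + 2) ≤ 4 * K * l ^ 2) ∧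
      (∀ i, l < 2 ^ i → v (i + 2) = 0) := by
  obtain ⟨K1, h1⟩ := base
  obtain ⟨K2, h2⟩ := step
  refine ⟨K1 + K2, fun l => ?_⟩
  induction l using Nat.strong_induction_on with
  | _ l ih =>
  intro hl w hw hN
  rcases Nat.lt_or_ge l 2 with hl2 | hl2
  · have e : l = 1 := by omega
    subst e
    have := h1 w (by omega) hN
    unfold Rl at this
    refine ⟨_, by simpa using this, ?_, ?_, ?_, ?_, ?_⟩
    · simp [u2]
    · simp [u2]
    · simp [u2]
    · intro i; simp [u2]
    · intro i _; simp [u2]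
  · obtain ⟨w0, w1, hw0, hw1, hN0, hN1, hR⟩ := h2 l w hl2 hw hN
    obtain ⟨v0, c0, a0, a1, a2, a3, a4⟩ := ih (l / 2) (by omega) (by omega) w0 hw0 hN0
    obtain ⟨v1, c1, b0, b1, b2, b3, b4⟩ := ih (l / 2) (by omega) (by omega) w1 hw1 hN1
    have hlog : Nat.log 2 l = Nat.log 2 (l / 2) + 1 := by
      rw [Nat.log_div_base]
      have := Nat.log_pos (b := 2) (by norm_num) hl2
      omega
    set h := l / 2 with hh
    have hsq : 4 * h ^ 2 ≤ l ^ 2 := by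
      have : 2 * h ≤ l := by omega
      calc 4 * h ^ 2 = (2 * h) ^ 2 := by ring
        _ ≤ l ^ 2 := Nat.pow_le_pow_left this 2
    have hsq' : (K1 + K2) * (4 * h ^ 2) ≤ (K1 + K2) * l ^ 2 := Nat.mul_le_mul_left _ hsq
    have hsq2 : (K1 + K2) * (4 * h ^ 2) * (Nat.log 2 h + 1) ≤ (K1 + K2) * l ^ 2 * (Nat.log 2 h + 1) :=
      Nat.mul_le_mul_right _ hsq'
    have hk2 : K2 * l ^ 2 ≤ (K1 + K2) * l ^ 2 := Nat.mul_le_mul_right _ (by omega)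
    refine ⟨fun i => K2 * l ^ 2 * u4 i + (shv v1 i + shv v0 i), ?_, ?_, ?_, ?_, ?_, ?_⟩
    · have hc := Cst.mul hR (Cst.mul c1.sig (c0.sig.conj ga)
        (w := fun i => shv v1 i + shv v0 i) (fun i => le_rfl))
        (w := fun i => K2 * l ^ 2 * u4 i + (shv v1 i + shv v0 i)) (fun i => le_rfl)
      rwa [inv_mul_cancel_right] at hc
    · simp only [u4, shv]
      rw [hlog]
      norm_num
      nlinarith
    · simp only [u4, shv]
      rw [hlog]
      norm_num
      nlinarith
    · simp only [u4, shv]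
      norm_num
      omega
    · intro i
      match i with
      | 0 => simp only [u4, shv]; norm_num; nlinarith
      | 1 => simp only [u4, shv]; norm_num; nlinarith
      | (i + 2) =>
        have x1 := a3 (i + 1)
        have x2 := b3 (i + 1)
        have e : u4 (i + 2 + 2) = 0 := by simp [u4]
        have e1 : ∀ v, shv v (i + 2 + 2) = v (i + 1 + 2) := fun v => rfl
        beta_reduce
        rw [e, e1, e1, pow_succ]
        nlinarith
    · intro i hi
      match i with
      | 0 => simp at hi; omega
      | 1 => simp at hi; omega
      | (i + 2) =>
        have hi' : h < 2 ^ (i + 1) := by rw [pow_succ] at hi; omega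
        have x1 := a4 (i + 1) hi'
        have x2 := b4 (i + 1) hi'
        have e : u4 (i + 2 + 2) = 0 := by simp [u4]
        have e1 : ∀ v, shv v (i + 2 + 2) = v (i + 1 + 2) := fun v => rfl
        simp only [e, e1, x1, x2]; simp

lemma pos_word : ∃ K : ℕ, ∀ W : F4, ∃ w : List L4, w.length ≤ FreeGroup.norm W ∧
    Rl u2 (K * FreeGroup.norm W) W (ev w) := by
  obtain ⟨K, hK⟩ := fin_ex (P := fun (p : L4) k => Rl u2 k (gen p)⁻¹ (gen p))
    (fun i k l h h' => Rl.mono h' h) (by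
      intro p
      refine rel2 _ _ fun G _ f ha hc hd hb hdc => ?_
      rw [map_inv, inv_eq_iff_mul_eq_one]
      cases p
      · simpa using ha
      · have : f gd * (f gc * f gd) = f gc * (f gd * f gd) := by rw [← mul_assoc, hdc, mul_assoc]
        simp [hb, mul_assoc, this, hd, hc]
      · simpa using hc
      · simpa using hd)
  have key : ∀ l : List (L4 × Bool), ∃ w : List L4, w.length = l.length ∧
      Rl u2 (K * l.length) (FreeGroup.mk l) (ev w) := by
    intro l
    induction l with
    | nil => exact ⟨[], rfl, by simpa [← FreeGroup.one_eq_mk] using Rl.refl _⟩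
    | cons p l ih =>
      obtain ⟨w, hw, hr⟩ := ih
      refine ⟨p.1 :: w, by simp [hw], ?_⟩
      have e : FreeGroup.mk (p :: l) = FreeGroup.mk [p] * FreeGroup.mk l := by
        rw [FreeGroup.mul_mk]; rfl
      rw [e, ev_cons, List.length_cons, mul_add, mul_one, add_comm]
      refine Rl.mul ?_ hr
      obtain ⟨x, s⟩ := p
      cases s
      · have : (FreeGroup.mk [(x, false)] : F4) = (gen x)⁻¹ := by
          simp [gen, FreeGroup.of, FreeGroup.inv_mk, FreeGroup.invRev]
        rw [this]; exact hK x
      · exact Rl.refl _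
  refine ⟨K, fun W => ?_⟩
  obtain ⟨w, hw, hr⟩ := key W.toWord
  rw [FreeGroup.mk_toWord] at hr
  exact ⟨w, hw.le, hr⟩

structure QR where
  X : F4
  R : F4
  e : ℤ
  h : ℕ

lemma Cst_list {v : ℕ → ℕ} {g : F4} (hg : Cst v g) : ∃ l : List QR,
    (∀ q ∈ l, q.R ∈ TT q.h ∧ (q.e = 1 ∨ q.e = -1)) ∧
    g = (l.map fun q => q.X * q.R ^ q.e * q.X⁻¹).prod ∧
    ∀ i, l.countP (fun q => q.h = i) ≤ v i := by
  induction hg with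
  | one v => exact ⟨[], by simp, by simp, by simp⟩
  | @mul u v w g h _ _ h3 ih1 ih2 =>
    obtain ⟨l1, a1, b1, c1⟩ := ih1
    obtain ⟨l2, a2, b2, c2⟩ := ih2
    refine ⟨l1 ++ l2, ?_, by simp [b1, b2], ?_⟩
    · intro q hq
      rcases List.mem_append.1 hq with hq | hq
      · exact a1 q hq
      · exact a2 q hq
    · intro i
      rw [List.countP_append]
      have := c1 i; have := c2 i; have := h3 i; omega
  | @rel v i r x hr hi =>
    refine ⟨[⟨x, r, 1, i⟩], by simpa using hr, by simp, ?_⟩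
    intro j
    by_cases hj : i = j
    · subst hj; simpa using hi
    · simp [hj]
  | @irel v i r x hr hi =>
    refine ⟨[⟨x, r, -1, i⟩], by simpa using hr, by simp, ?_⟩
    intro j
    by_cases hj : i = j
    · subst hj; simpa using hi
    · simp [hj]

def chi : F4 →* Multiplicative ℤ :=
  FreeGroup.lift fun x => match x with
    | L4.a => Multiplicative.ofAdd 1
    | _ => 1

def ch (g : F4) : ℤ := Multiplicative.toAdd (chi g)

lemma ch_mul (g h : F4) : ch (g * h) = ch g + ch h := by simp [ch]
lemma ch_pow (g : F4) (n : ℕ) : ch (g ^ n) = n * ch g := by simp [ch]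
lemma ch_a : ch ga = 1 := by simp [ch, chi, ga]
lemma ch_b : ch gb = 0 := by simp [ch, chi, gb]
lemma ch_c : ch gc = 0 := by simp [ch, chi, gc]
lemma ch_d : ch gd = 0 := by simp [ch, chi, gd]

lemma ch_sigma (g : F4) : ch (sigma g) = 2 * ch g := by
  have : (chi.comp sigma) = (powMonoidHom 2).comp chi := by
    ext x
    cases x <;> rfl
  have h := DFunLike.congr_fun this g
  simp only [MonoidHom.comp_apply, powMonoidHom_apply] at h
  rw [ch, h, ch, toAdd_pow]; simp

lemma ch_iter (i : ℕ) (g : F4) : ch ((⇑sigma)^[i] g) = 2 ^ i * ch g := by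
  induction i with
  | zero => simp
  | succ i ih => rw [Function.iterate_succ_apply', ch_sigma, ih, pow_succ]; ring

lemma ch_r1 : ch r1 = 4 := by simp [r1, ch_mul, ch_pow, ch_a, ch_d]
lemma ch_r2 : ch r2 = 12 := by simp [r2, ch_mul, ch_pow, ch_a, ch_c, ch_d]

lemma ch_TT {t : ℕ} {r : F4} (h : r ∈ TT t) : (t ≤ 1 ∧ (ch r = 0 ∨ ch r = 2)) ∨
    (2 ≤ t ∧ (ch r = 2 ^ (t - 2) * 4 ∨ ch r = 2 ^ (t - 2) * 12)) := by
  match t, h with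
  | 0, h =>
    simp only [TT, Set.mem_singleton_iff] at h; subst h
    simp [ch_pow, ch_a]
  | 1, h =>
    simp only [TT, Set.mem_insert_iff, Set.mem_singleton_iff] at h
    rcases h with rfl | rfl | rfl | rfl <;> simp [ch_pow, ch_mul, ch_b, ch_c, ch_d]
  | (i + 2), h =>
    simp only [TT, Set.mem_insert_iff, Set.mem_singleton_iff] at h
    rcases h with rfl | rfl <;> simp [ch_iter, ch_r1, ch_r2]

lemma ch_Sh {i : ℕ} {r : F4} (h : r ∈ Sh i) : (i = 0 ∧ (ch r = 0 ∨ ch r = 2)) ∨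
    (ch r = 2 ^ i * 4 ∨ ch r = 2 ^ i * 12) := by
  match i, h with
  | 0, h =>
    simp only [Sh, Set.mem_insert_iff, Set.mem_singleton_iff] at h
    rcases h with rfl | rfl | rfl | rfl | rfl | rfl | rfl <;>
      simp [ch_pow, ch_mul, ch_a, ch_b, ch_c, ch_d]
  | (i + 1), h =>
    simp only [Sh, Set.mem_insert_iff, Set.mem_singleton_iff] at h
    rcases h with rfl | rfl
    · right; left; rw [ch_iter]; exact congrArg _ ch_r1
    · right; right; rw [ch_iter]; exact congrArg _ ch_r2

lemma pow_ne3 (a b : ℕ) : (2 : ℤ) ^ a * 4 ≠ 2 ^ b * 12 := by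
  intro h
  have h' : 2 ^ a * 4 = 2 ^ b * 12 := by exact_mod_cast h
  have h3 : 3 ∣ 2 ^ (a + 2) := ⟨2 ^ b * 4, by rw [pow_add]; omega⟩
  have := Nat.Prime.dvd_of_dvd_pow Nat.prime_three h3
  omega

lemma pow_inj2 (a b : ℕ) (c : ℤ) (hc : c ≠ 0) (h : (2 : ℤ) ^ a * c = 2 ^ b * c) : a = b := by
  have := mul_right_cancel₀ hc h
  exact Nat.pow_right_injective (le_refl 2) (by exact_mod_cast this)

lemma ht_eq {t i : ℕ} {r : F4} (h : r ∈ TT t) (h' : r ∈ Sh i) : t - 2 = i ∧ (i = 0 ∨ t = i + 2) := by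
  have p1 : ∀ j : ℕ, (1 : ℤ) ≤ 2 ^ j := fun j => one_le_pow₀ (by norm_num)
  rcases ch_TT h with ⟨ht, h1⟩ | ⟨ht, h1⟩
  · rcases ch_Sh h' with ⟨hi, h2⟩ | h2
    · omega
    · have := p1 i; omega
  · rcases ch_Sh h' with ⟨hi, h2⟩ | h2
    · have := p1 (t - 2); omega
    · have : t - 2 = i := by
        rcases h1 with h1 | h1 <;> rcases h2 with h2 | h2 <;> rw [h1] at h2
        · exact pow_inj2 _ _ 4 (by norm_num) h2
        · exact absurd h2 (pow_ne3 _ _)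
        · exact absurd h2.symm (pow_ne3 _ _)
        · exact pow_inj2 _ _ 12 (by norm_num) h2
      omega

lemma card_le_countP {α : Type} (l : List α) (P : Fin l.length → Prop) (q : α → Bool)
    (h : ∀ j, P j → q (l.get j) = true) : Nat.card {j : Fin l.length // P j} ≤ l.countP q := by
  classical
  have h1 : Nat.card {j : Fin l.length // P j} ≤ Nat.card {j : Fin l.length // q (l.get j) = true} :=
    Nat.card_le_card_of_injective (fun j => ⟨j.1, h j.1 j.2⟩) fun a b hab => by
      simpa [Subtype.ext_iff] using hab
  refine h1.trans (le_of_eq ?_)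
  rw [Nat.card_eq_fintype_card, Fintype.card_subtype, Finset.card_filter]
  clear h1 h
  induction l with
  | nil => simp
  | cons x t ih =>
    rw [List.countP_cons]
    simp only [List.length_cons]
    rw [Fin.sum_univ_succ]
    have := ih (fun _ => True)
    rw [add_comm, ← this]
    rfl

lemma countP_split (l : List QR) : l.countP (fun q => q.h ≤ 2) ≤
    l.countP (fun q => q.h = 0) + l.countP (fun q => q.h = 1) + l.countP (fun q => q.h = 2) := by
  induction l with
  | nil => simp
  | cons x t ih =>
    simp only [List.countP_cons, decide_eq_true_eq]
    split_ifs <;> omega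

/-- every `W ∈ N(∞)` of length at most `x` admits an expression
as a product of conjugates of powers `±1` of relators of `R(∞)` whose numbers
of relators of each height are controlled as stated. -/
theorem grigorchuk_h_tuple :
    ∃ C : ℝ, 1 < C ∧
      ∀ x : ℕ, 2 ≤ x →
        ∀ W ∈ Subgroup.normalClosure Rinf, FreeGroup.norm W ≤ x →
          ∃ (L : ℕ) (X R : Fin L → F4) (ε : Fin L → ℤ),
            (∀ j, R j ∈ Rinf ∧ (ε j = 1 ∨ ε j = -1)) ∧
            W = (List.ofFn fun j => X j * R j ^ ε j * (X j)⁻¹).prod ∧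
            (Nat.card {j : Fin L // R j ∈ Sh 0} : ℝ) ≤
              4 * C * (x : ℝ) ^ 2 * Real.logb 2 (x : ℝ) ∧
            (∀ i : ℕ, 1 ≤ i → (i : ℝ) ≤ Real.logb 2 (x : ℝ) →
              (Nat.card {j : Fin L // R j ∈ Sh i} : ℝ) ≤
                C * (x : ℝ) ^ 2 / 2 ^ (i - 1)) ∧
            (∀ j, ∀ i : ℕ, R j ∈ Sh i → (i : ℝ) ≤ Real.logb 2 (x : ℝ)) := by
  obtain ⟨k0, hk0⟩ := pos_word
  obtain ⟨K, hK⟩ := main_rec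
  refine ⟨8 * ((K : ℝ) + k0) + 2, by
    have : (0 : ℝ) ≤ (K : ℝ) + k0 := by positivity
    linarith, ?_⟩
  intro x hx W hW hn
  obtain ⟨w, hw, hr⟩ := hk0 W
  obtain ⟨v, hc, h0, h1, h2, h3, h4⟩ := hK (x - 1) (by omega) w (by omega) (hr.mem_iff hW)
  have hcc : Cst (fun i => k0 * FreeGroup.norm W * u2 i + v i) W := by
    have := Cst.mul hr hc (w := fun i => k0 * FreeGroup.norm W * u2 i + v i) (fun i => le_rfl)
    rwa [inv_mul_cancel_right] at this
  obtain ⟨l, hl1, hl2, hl3⟩ := Cst_list hcc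
  have hx1 : (1 : ℝ) ≤ x := by exact_mod_cast (by omega : 1 ≤ x)
  have hlog1 : 1 ≤ Real.logb 2 (x : ℝ) := by
    rw [Real.le_logb_iff_rpow_le (by norm_num) (by linarith)]
    simpa using (by exact_mod_cast hx : (2 : ℝ) ≤ x)
  have hpow : ∀ i : ℕ, 2 ^ i ≤ x → (i : ℝ) ≤ Real.logb 2 (x : ℝ) := by
    intro i hi
    rw [Real.le_logb_iff_rpow_le (by norm_num) (by linarith), Real.rpow_natCast]
    exact_mod_cast hi
  have hlog : ((Nat.log 2 (x - 1) : ℕ) : ℝ) ≤ Real.logb 2 (x : ℝ) :=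
    hpow _ ((Nat.pow_log_le_self 2 (by omega)).trans (by omega))
  have hsq : (x - 1) ^ 2 ≤ x ^ 2 := Nat.pow_le_pow_left (by omega) 2
  refine ⟨l.length, fun j => (l.get j).X, fun j => (l.get j).R, fun j => (l.get j).e, ?_, ?_, ?_, ?_, ?_⟩
  · intro j
    have := hl1 _ (List.get_mem l j)
    exact ⟨TT_sub this.1, this.2⟩
  · rw [hl2]
    congr 1
    conv_lhs => rw [← List.ofFn_get l]
    rw [List.map_ofFn]
    rfl
  · have c1 := card_le_countP l (fun j => (l.get j).R ∈ Sh 0) (fun q => q.h ≤ 2) (by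
      intro j hj
      have := ht_eq (hl1 _ (List.get_mem l j)).1 hj
      simp only [decide_eq_true_eq]; omega)
    have c2 := countP_split l
    have e0 := hl3 0
    have e1 := hl3 1
    have e2 := hl3 2
    simp only [u2] at e0 e1 e2
    norm_num at e0 e1 e2
    have hkn : k0 * FreeGroup.norm W ≤ k0 * x := Nat.mul_le_mul_left _ hn
    have q1 : K * (x - 1) ^ 2 ≤ K * x ^ 2 := Nat.mul_le_mul_left _ hsq
    have q2 := Nat.mul_le_mul_right (Nat.log 2 (x - 1) + 1) q1
    have tot : Nat.card {j : Fin l.length // (l.get j).R ∈ Sh 0} ≤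
        2 * (k0 * x) + 2 * (K * x ^ 2 * (Nat.log 2 (x - 1) + 1)) + K * x ^ 2 := by
      omega
    have totR : (Nat.card {j : Fin l.length // (l.get j).R ∈ Sh 0} : ℝ) ≤
        2 * (k0 * x) + 2 * (K * x ^ 2 * (Nat.log 2 (x - 1) + 1)) + K * x ^ 2 := by
      exact_mod_cast tot
    refine totR.trans ?_
    set L := Real.logb 2 (x : ℝ) with hL
    have hK0 : (0 : ℝ) ≤ K := by positivity
    have hk0' : (0 : ℝ) ≤ k0 := by positivity
    have x2 : (x : ℝ) ≤ x ^ 2 := by nlinarith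
    have x2L : (x : ℝ) ^ 2 ≤ x ^ 2 * L := by nlinarith
    have s1 : (k0 : ℝ) * x ≤ k0 * (x ^ 2 * L) := mul_le_mul_of_nonneg_left (x2.trans x2L) hk0'
    have s2 : (K : ℝ) * x ^ 2 ≤ K * (x ^ 2 * L) := mul_le_mul_of_nonneg_left x2L hK0
    have s3 : (K : ℝ) * x ^ 2 * (Nat.log 2 (x - 1) + 1) ≤ K * x ^ 2 * (L + L) :=
      mul_le_mul_of_nonneg_left (by linarith) (by positivity)
    have s4 : 0 ≤ (K : ℝ) * (x ^ 2 * L) := by positivity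
    have s5 : 0 ≤ (k0 : ℝ) * (x ^ 2 * L) := by positivity
    have s6 : 0 ≤ (x ^ 2 * L) := by positivity
    nlinarith
  · intro i hi _
    have c1 := card_le_countP l (fun j => (l.get j).R ∈ Sh i) (fun q => q.h = i + 2) (by
      intro j hj
      have := ht_eq (hl1 _ (List.get_mem l j)).1 hj
      simp only [decide_eq_true_eq]; omega)
    have e0 := hl3 (i + 2)
    simp only [u2, if_neg (show ¬ i + 2 ≤ 1 by omega), mul_zero, zero_add] at e0
    have e3 := h3 i
    have tot : 2 ^ i * Nat.card {j : Fin l.length // (l.get j).R ∈ Sh i} ≤ 4 * K * x ^ 2 :=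
      (Nat.mul_le_mul_left _ (c1.trans e0)).trans (e3.trans (Nat.mul_le_mul_left _ hsq))
    have totR : (2 : ℝ) ^ i * Nat.card {j : Fin l.length // (l.get j).R ∈ Sh i} ≤ 4 * K * x ^ 2 := by
      exact_mod_cast tot
    rw [le_div_iff₀ (by positivity)]
    obtain ⟨i, rfl⟩ : ∃ k, i = k + 1 := ⟨i - 1, by omega⟩
    rw [pow_succ] at totR
    simp only [Nat.add_sub_cancel]
    have : 0 ≤ (K : ℝ) * x ^ 2 := by positivity
    have : 0 ≤ (k0 : ℝ) * x ^ 2 := by positivity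
    have : 0 ≤ (x : ℝ) ^ 2 := by positivity
    nlinarith
  · intro j i hj
    have hq := hl1 _ (List.get_mem l j)
    have := ht_eq hq.1 hj
    rcases Nat.eq_zero_or_pos i with rfl | hi
    · simp; linarith
    · apply hpow
      by_contra hlt
      have hz := h4 i (by omega)
      have e0 := hl3 (i + 2)
      simp only [u2, if_neg (show ¬ i + 2 ≤ 1 by omega), mul_zero, zero_add, hz] at e0
      norm_num at e0
      exact e0 _ (List.get_mem l j) (by omega)
end
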